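/- Suppose char(K) = 0 and S = K[x_1,...,x_n]. Let I ⊆ S and J ⊆ S be homogeneous ideals such that Gin_lex(J) is a lex ideal. Then for a general change of coordinates g ∈ GL_n(K), one has H(I ∩ g(J), d) ≤ H(I^lex ∩ J^oplex, d) for all d ≥ 0. -/

import Mathlib

open MvPolynomial TensorProduct CategoryTheory

noncomputable section

/-- The polynomial ring `S = K[x_1,...,x_n]`, standard graded. -/
abbrev PS (K : Type) [Field K] (n : ℕ) : Type := MvPolynomial (Fin n) K

variable (K : Type) [Field K] (n : ℕ)

/-- An ideal of `S` is homogeneous if it contains all homogeneous components of its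
elements. -/
def IsHomog (I : Ideal (PS K n)) : Prop :=
  ∀ f ∈ I, ∀ d : ℕ, MvPolynomial.homogeneousComponent d f ∈ I

/-- The change of coordinates of `S` induced by `g ∈ GL_n(K)`, determined by
`g(x_i) = ∑_j g_{ji} x_j`. -/
def coordChange (g : GL (Fin n) K) : PS K n →ₐ[K] PS K n :=
  MvPolynomial.aeval (fun i => ∑ j, ((g : Matrix (Fin n) (Fin n) K) j i) • MvPolynomial.X j)

/-- A property `P` holds for a general change of coordinates `g ∈ GL_n(K)` if there is a
nonempty Zariski open subset `U ⊆ GL_n(K)` on which it holds; equivalently (as `GL_n(K)` is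
an irreducible variety over the infinite field `K`) there is a nonzero polynomial `F` in the
matrix entries such that `P g` holds whenever `F` does not vanish at `g`. -/
def generally (P : GL (Fin n) K → Prop) : Prop :=
  ∃ F : MvPolynomial (Fin n × Fin n) K, F ≠ 0 ∧
    ∀ g : GL (Fin n) K,
      MvPolynomial.eval (fun p => (g : Matrix (Fin n) (Fin n) K) p.1 p.2) F ≠ 0 → P g

/-- The Hilbert function: `H(I,d) = dim_K I_d`. -/
def hilb (I : Ideal (PS K n)) (d : ℕ) : ℕ :=
  Module.finrank K ↥(Submodule.restrictScalars K I ⊓ homogeneousSubmodule (Fin n) K d)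

/-- `a <_lex b` for the lexicographic order induced by `x_1 > x_2 > ⋯ > x_n`. -/
def lexLt (a b : Fin n →₀ ℕ) : Prop := Finsupp.Lex (· < ·) (· < ·) a b

/-- `a <_oplex b` for the (opposite) lexicographic order induced by `x_n > ⋯ > x_1`. -/
def oplexLt (a b : Fin n →₀ ℕ) : Prop := Finsupp.Lex (· > ·) (· < ·) a b

/-- The total degree of an exponent vector. -/
def expDeg (m : Fin n →₀ ℕ) : ℕ := ∑ i, m i

/-- A monomial ideal: together with any polynomial it contains each of its monomials. -/
def IsMonomialIdeal (I : Ideal (PS K n)) : Prop :=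
  ∀ f ∈ I, ∀ m ∈ f.support, MvPolynomial.monomial m (1 : K) ∈ I

/-- A lex ideal: a monomial ideal whose monomials form a lex set. -/
def IsLexIdeal (I : Ideal (PS K n)) : Prop :=
  IsMonomialIdeal K n I ∧ ∀ u v : Fin n →₀ ℕ, expDeg n u = expDeg n v →
    MvPolynomial.monomial u (1 : K) ∈ I → lexLt n u v →
      MvPolynomial.monomial v (1 : K) ∈ I

/-- An opposite lex ideal: a monomial ideal whose monomials form an opposite lex set. -/
def IsOplexIdeal (I : Ideal (PS K n)) : Prop :=
  IsMonomialIdeal K n I ∧ ∀ u v : Fin n →₀ ℕ, expDeg n u = expDeg n v →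
    MvPolynomial.monomial u (1 : K) ∈ I → oplexLt n u v →
      MvPolynomial.monomial v (1 : K) ∈ I

/-- The initial ideal `in_r(I)` of `I` with respect to a (strict) monomial order `r`:
the ideal generated by the `r`-maximal monomials of the nonzero elements of `I`. -/
def initialIdealO (r : (Fin n →₀ ℕ) → (Fin n →₀ ℕ) → Prop) (I : Ideal (PS K n)) :
    Ideal (PS K n) :=
  Ideal.span {g | ∃ f ∈ I, ∃ m ∈ f.support,
    (∀ m' ∈ f.support, m' = m ∨ r m' m) ∧ g = MvPolynomial.monomial m (1 : K)}


section Comb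

/-- Pure lexicographic comparison of exponent vectors. -/
def lxlt {n : ℕ} (a b : Fin n → ℕ) : Prop := ∃ i, (∀ j < i, a j = b j) ∧ a i < b i

/-- Comparison starting at the last coordinate. -/
def oplt {n : ℕ} (a b : Fin n → ℕ) : Prop := ∃ i, (∀ j, i < j → a j = b j) ∧ a i < b i

/-- Exponent vectors of degree `d`. -/
def mon (n d : ℕ) : Finset (Fin n → ℕ) := Finset.Nat.antidiagonalTuple n d

theorem mem_mon {n d : ℕ} {a : Fin n → ℕ} : a ∈ mon n d ↔ ∑ i, a i = d :=
  Finset.Nat.mem_antidiagonalTuple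

theorem lxlt_iff {n : ℕ} {a b : Fin n → ℕ} : lxlt a b ↔ toLex a < toLex b := Iff.rfl

theorem lxlt_tri {n : ℕ} (a b : Fin n → ℕ) : lxlt a b ∨ a = b ∨ lxlt b a := by
  rcases lt_trichotomy (toLex a) (toLex b) with h | h | h
  · exact Or.inl h
  · exact Or.inr (Or.inl (toLex.injective h))
  · exact Or.inr (Or.inr h)

theorem lxlt_irrefl {n : ℕ} (a : Fin n → ℕ) : ¬ lxlt a a := by
  rintro ⟨i, _, h⟩; omega

theorem lxlt_trans {n : ℕ} {a b c : Fin n → ℕ} (h : lxlt a b) (h' : lxlt b c) : lxlt a c :=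
  lt_trans (lxlt_iff.1 h) (lxlt_iff.1 h')

/-- Lex segments in degree `d`. -/
def LxSeg (n d : ℕ) (C : Finset (Fin n → ℕ)) : Prop :=
  C ⊆ mon n d ∧ ∀ u ∈ C, ∀ v ∈ mon n d, lxlt u v → v ∈ C

/-- Reverse-lex segments in degree `d` (complements of opposite lex segments). -/
def RvSeg (n d : ℕ) (C : Finset (Fin n → ℕ)) : Prop :=
  C ⊆ mon n d ∧ ∀ u ∈ C, ∀ v ∈ mon n d, oplt v u → v ∈ C

/-- Strongly stable sets in degree `d`. -/
def StSt (n d : ℕ) (C : Finset (Fin n → ℕ)) : Prop :=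
  C ⊆ mon n d ∧ ∀ u ∈ C, ∀ v : Fin n → ℕ, ∀ i j : Fin n, i < j →
    v i = u i + 1 → v j + 1 = u j → (∀ k, k ≠ i → k ≠ j → v k = u k) → v ∈ C

theorem lx_exists (n d c : ℕ) (hc : c ≤ (mon n d).card) : ∃ C, LxSeg n d C ∧ C.card = c := by
  obtain ⟨k, hk⟩ := Nat.exists_eq_add_of_le hc
  induction k generalizing c with
  | zero => exact ⟨mon n d, ⟨subset_rfl, fun _ _ v hv _ => hv⟩, by omega⟩
  | succ k ih =>
    obtain ⟨C, hC, hcard⟩ := ih (c + 1) (by omega) (by omega)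
    have hne : C.Nonempty := by rw [← Finset.card_pos]; omega
    obtain ⟨m, hm, hmin⟩ := Finset.exists_min_image C toLex hne
    refine ⟨C.erase m, ⟨(Finset.erase_subset _ _).trans hC.1, ?_⟩, ?_⟩
    · intro u hu v hv huv
      rw [Finset.mem_erase] at hu ⊢
      refine ⟨?_, hC.2 u hu.2 v hv huv⟩
      rintro rfl
      exact absurd (lxlt_iff.1 huv) (not_lt.2 (hmin u hu.2))
    · rw [Finset.card_erase_of_mem hm]; omega

theorem lx_total {n d : ℕ} {C D : Finset (Fin n → ℕ)} (hC : LxSeg n d C) (hD : LxSeg n d D) :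
    C ⊆ D ∨ D ⊆ C := by
  by_contra! h
  obtain ⟨h1, h2⟩ := h
  obtain ⟨c, hc, hcD⟩ := Finset.not_subset.1 h1
  obtain ⟨e, he, heC⟩ := Finset.not_subset.1 h2
  rcases lxlt_tri c e with h | h | h
  · exact heC (hC.2 c hc e (hD.1 he) h)
  · subst h; exact heC hc
  · exact hcD (hD.2 e he c (hC.1 hc) h)

theorem lx_sub_of_card {n d : ℕ} {C D : Finset (Fin n → ℕ)} (hC : LxSeg n d C)
    (hD : LxSeg n d D) (h : C.card ≤ D.card) : C ⊆ D := by
  rcases lx_total hC hD with h' | h'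
  · exact h'
  · exact (Finset.eq_of_subset_of_card_le h' h).symm ▸ subset_rfl

/-- The comparison statement in `n` variables. -/
def CombP (n : ℕ) : Prop := ∀ (d : ℕ) (B L R : Finset (Fin n → ℕ)), StSt n d B → LxSeg n d L →
  RvSeg n d R → L.card ≤ B.card → (L ∩ R).card ≤ (B ∩ R).card

theorem combP_small (n : ℕ) (hn : n ≤ 1) : CombP n := by
  intro d B L R hB hL hR hcard
  apply Finset.card_le_card
  apply Finset.inter_subset_inter_right
  intro x hx
  have hpos : 0 < B.card := lt_of_lt_of_le (Finset.card_pos.2 ⟨x, hx⟩) hcard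
  obtain ⟨y, hy⟩ := Finset.card_pos.1 hpos
  have h1 := mem_mon.1 (hL.1 hx)
  have h2 := mem_mon.1 (hB.1 hy)
  have : x = y := by
    funext i
    have hs : ∀ j : Fin n, j = i := fun j => Fin.ext (by omega)
    have e1 : ∑ j, x j = x i := Fintype.sum_eq_single i (fun j hj => absurd (hs j) hj)
    have e2 : ∑ j, y j = y i := Fintype.sum_eq_single i (fun j hj => absurd (hs j) hj)
    omega
  exact this ▸ hy

/-- Pairs `(i,a)` with `a` supported in coordinates `≤ i`. -/
def expPairs {n : ℕ} (C : Finset (Fin n → ℕ)) : Finset (Fin n × (Fin n → ℕ)) := by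
  classical
  exact (Finset.univ ×ˢ C).filter (fun p => ∀ j, p.1 < j → p.2 j = 0)

theorem mem_expPairs {n : ℕ} {C : Finset (Fin n → ℕ)} {p : Fin n × (Fin n → ℕ)} :
    p ∈ expPairs C ↔ p.2 ∈ C ∧ ∀ j, p.1 < j → p.2 j = 0 := by
  classical
  simp [expPairs]

theorem card_expPairs {n : ℕ} (C : Finset (Fin n → ℕ)) (e : ℕ) (hC : C ⊆ mon n e) :
    (expPairs C).card =
      ∑ i, (C ∩ (mon n e).filter (fun a => ∀ j, i < j → a j = 0)).card := by
  classical
  rw [Finset.card_eq_sum_card_fiberwise (f := Prod.fst) (t := Finset.univ) (by simp)]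
  apply Finset.sum_congr rfl
  intro i _
  symm
  apply Finset.card_bij (fun a _ => (i, a))
  · intro a ha
    simp only [Finset.mem_inter, Finset.mem_filter] at ha
    simp only [Finset.mem_filter, mem_expPairs]
    exact ⟨⟨ha.1, ha.2.2⟩, trivial⟩
  · intro a _ b _ h; exact (Prod.ext_iff.1 h).2
  · rintro ⟨i', a⟩ h
    simp only [Finset.mem_filter, mem_expPairs] at h
    obtain ⟨⟨h1, h2⟩, rfl⟩ := h
    refine ⟨a, ?_, rfl⟩
    simp only [Finset.mem_inter, Finset.mem_filter]
    exact ⟨h1, hC h1, h2⟩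

theorem rv_initial (n e : ℕ) (i : Fin n) :
    RvSeg n e ((mon n e).filter (fun a => ∀ j, i < j → a j = 0)) := by
  refine ⟨Finset.filter_subset _ _, ?_⟩
  intro u hu v hv ⟨k, hk, hk'⟩
  simp only [Finset.mem_filter] at hu ⊢
  refine ⟨hv, fun j hj => ?_⟩
  have hki : k ≤ i := by
    by_contra h
    have := hu.2 k (by omega)
    omega
  rw [hk j (lt_of_le_of_lt hki hj)]
  exact hu.2 j hj

theorem sum_add_single {n : ℕ} (a : Fin n → ℕ) (i : Fin n) :
    ∑ j, (a + Pi.single i 1 : Fin n → ℕ) j = ∑ j, a j + 1 := by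
  simp [Finset.sum_add_distrib]

theorem expand {n : ℕ} (hP : CombP (n+1)) (e : ℕ) (C D C' D' : Finset (Fin (n+1) → ℕ))
    (hC : StSt (n+1) e C) (hD : ∀ a ∈ C, ∀ i, a + Pi.single i 1 ∈ D)
    (hC' : LxSeg (n+1) e C') (hD' : LxSeg (n+1) (e+1) D') (h1 : C'.card = C.card)
    (h2 : D'.card = D.card) : ∀ c ∈ C', c + Pi.single (Fin.last n) 1 ∈ D' := by
  classical
  intro c hc
  by_contra hb
  set b0 := c + Pi.single (Fin.last n) 1 with hb0
  have hcsum := mem_mon.1 (hC'.1 hc)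
  have hb0m : b0 ∈ mon (n+1) (e+1) := mem_mon.2 (by rw [hb0, sum_add_single, hcsum])
  set G := (mon (n+1) (e+1)).filter (fun b => b = b0 ∨ lxlt b0 b) with hG
  have hlt : D'.card < G.card := by
    apply Finset.card_lt_card
    refine Finset.ssubset_iff_subset_ne.2 ⟨?_, ?_⟩
    · intro x hx
      rw [hG, Finset.mem_filter]
      refine ⟨hD'.1 hx, ?_⟩
      rcases lxlt_tri x b0 with h | h | h
      · exact absurd (hD'.2 x hx b0 hb0m h) hb
      · exact Or.inl h
      · exact Or.inr h
    · intro h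
      apply hb
      rw [h, hG, Finset.mem_filter]
      exact ⟨hb0m, Or.inl rfl⟩
  have hGle : G.card ≤ (expPairs C').card := by
    refine le_trans (Finset.card_le_card (t := (expPairs C').image
      (fun p => p.2 + Pi.single p.1 1)) ?_) Finset.card_image_le
    intro b hbG
    rw [hG, Finset.mem_filter] at hbG
    obtain ⟨hbm, hbb⟩ := hbG
    have hbsum := mem_mon.1 hbm
    have hne : (Finset.univ.filter (fun i => b i ≠ 0)).Nonempty := by
      by_contra hemp
      rw [Finset.not_nonempty_iff_eq_empty, Finset.filter_eq_empty_iff] at hemp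
      have : ∑ i, b i = 0 := Finset.sum_eq_zero (fun i hi => by simpa using hemp hi)
      omega
    obtain ⟨i, hi, hmax⟩ := Finset.exists_max_image _ id hne
    simp only [Finset.mem_filter, Finset.mem_univ, true_and, id] at hi hmax
    have hzero : ∀ j, i < j → b j = 0 := fun j hj => by
      by_contra h; exact absurd (hmax j h) (not_le.2 hj)
    set a : Fin (n+1) → ℕ := fun j => if j = i then b i - 1 else b j with ha
    have hab : a + Pi.single i 1 = b := by
      funext j
      by_cases hj : j = i
      · subst hj; simp [ha]; omega
      · simp [ha, hj]
    have hasum : ∑ j, a j = e := by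
      have := sum_add_single a i
      rw [hab] at this; omega
    rw [Finset.mem_image]
    refine ⟨(i, a), mem_expPairs.2 ⟨?_, ?_⟩, hab⟩
    swap
    · intro j hj; simp only [ha]; rw [if_neg (ne_of_gt hj)]; exact hzero j hj
    have key : a = c ∨ lxlt c a := by
      rcases hbb with hbb | ⟨k, hk, hk'⟩
      · left
        have hil : i = Fin.last n := by
          by_contra h
          have := hzero (Fin.last n) (lt_of_le_of_ne (Fin.le_last i) h)
          rw [hbb, hb0] at this; simp at this
        have : a + Pi.single i 1 = c + Pi.single i 1 := by rw [hab, hbb, hb0, hil]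
        exact add_right_cancel this
      · have hkl : k ≠ Fin.last n := by
          rintro rfl
          have hs : ∑ j, b0 j < ∑ j, b j := by
            apply Finset.sum_lt_sum
            · intro j _
              rcases lt_or_eq_of_le (Fin.le_last j) with h | h
              · exact (hk j h).le
              · subst h; exact hk'.le
            · exact ⟨_, Finset.mem_univ _, hk'⟩
          rw [mem_mon.1 hb0m, hbsum] at hs; omega
        have hbk : ∀ j, j ≤ k → b0 j = c j := by
          intro j hj
          have : j ≠ Fin.last n := by
            rintro rfl; exact hkl (le_antisymm (Fin.le_last k) hj)
          simp [hb0, this]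
        have hki : k ≤ i := by
          by_contra h
          have := hzero k (by omega)
          omega
        have hpre : ∀ j < k, c j = a j := by
          intro j hj
          rw [← hbk j hj.le, hk j hj]
          simp only [ha]; rw [if_neg (by rintro rfl; omega)]
        rw [hbk k le_rfl] at hk'
        rcases lt_or_eq_of_le hki with h | h
        · right
          refine ⟨k, hpre, ?_⟩
          simp only [ha]; rw [if_neg (ne_of_lt h)]; exact hk'
        · subst h
          have hak : a k = b k - 1 := by simp [ha]
          rcases lt_or_eq_of_le (show c k ≤ a k by omega) with h' | h'
          · exact Or.inr ⟨k, hpre, h'⟩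
          · left
            have hle : ∀ j, a j ≤ c j := by
              intro j
              rcases lt_trichotomy j k with h | h | h
              · exact (hpre j h).ge
              · subst h; omega
              · have : a j = 0 := by simp only [ha]; rw [if_neg (ne_of_gt h)]; exact hzero j h
                omega
            funext j
            by_contra hne
            have : ∑ j, a j < ∑ j, c j := Finset.sum_lt_sum (fun j _ => hle j)
              ⟨j, Finset.mem_univ _, lt_of_le_of_ne (hle j) hne⟩
            omega
    rcases key with h | h
    · simpa [h] using hc
    · exact hC'.2 c hc a (mem_mon.2 hasum) h
  have hmid : (expPairs C').card ≤ (expPairs C).card := by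
    rw [card_expPairs C' e hC'.1, card_expPairs C e hC.1]
    apply Finset.sum_le_sum
    intro i _
    exact hP e C C' _ hC hC' (rv_initial _ _ i) h1.le
  have hCD : (expPairs C).card ≤ D.card := by
    apply Finset.card_le_card_of_injOn (fun p => p.2 + Pi.single p.1 1)
    · intro p hp
      exact hD _ (mem_expPairs.1 hp).1 _
    · rintro ⟨i, a⟩ hp ⟨j, b⟩ hq h
      have hp := (mem_expPairs.1 hp).2
      have hq := (mem_expPairs.1 hq).2
      simp only at hp hq h
      have : i = j := by
        rcases lt_trichotomy i j with h' | h' | h'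
        · have h3 := congrFun h j
          simp [hp j h', ne_of_gt h'] at h3
        · exact h'
        · have h3 := congrFun h i
          simp [hq i h', ne_of_gt h'] at h3
      subst this
      rw [add_right_cancel h]
  omega

/-- Section of a set of exponent vectors at last coordinate `k`. -/
def sec {n : ℕ} (B : Finset (Fin (n+1) → ℕ)) (k : ℕ) : Finset (Fin n → ℕ) := by
  classical
  exact (B.filter (fun a => a (Fin.last n) = k)).image (fun a i => a i.castSucc)

theorem mem_sec {n : ℕ} {B : Finset (Fin (n+1) → ℕ)} {k : ℕ} {u : Fin n → ℕ} :
    u ∈ sec B k ↔ (Fin.snoc u k : Fin (n+1) → ℕ) ∈ B := by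
  classical
  simp only [sec, Finset.mem_image, Finset.mem_filter]
  constructor
  · rintro ⟨a, ⟨h1, rfl⟩, rfl⟩
    have e := Fin.snoc_init_self a
    exact e.symm ▸ h1
  · intro h
    exact ⟨_, ⟨h, by simp⟩, by simp⟩

theorem snoc_mem_mon {n d k : ℕ} {u : Fin n → ℕ} :
    (Fin.snoc u k : Fin (n+1) → ℕ) ∈ mon (n+1) d ↔ ∑ i, u i + k = d := by
  rw [mem_mon, Fin.sum_univ_castSucc]
  simp

theorem card_eq_sum_sec {n d : ℕ} (B : Finset (Fin (n+1) → ℕ)) (hB : B ⊆ mon (n+1) d) :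
    B.card = ∑ k ∈ Finset.range (d+1), (sec B k).card := by
  classical
  rw [Finset.card_eq_sum_card_fiberwise (f := fun a => a (Fin.last n))
    (t := Finset.range (d+1))]
  · apply Finset.sum_congr rfl
    intro k _
    rw [sec, Finset.card_image_of_injOn]
    intro a ha b hb h
    simp only [Finset.coe_filter, Set.mem_ofPred_eq] at ha hb
    funext i
    refine Fin.lastCases ?_ (fun j => ?_) i
    · rw [ha.2, hb.2]
    · exact congrFun h j
  · intro a ha
    have := mem_mon.1 (hB ha)
    have h2 : a (Fin.last n) ≤ ∑ i, a i := Finset.single_le_sum (fun _ _ => Nat.zero_le _)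
      (Finset.mem_univ _)
    simp only [Finset.coe_range, Set.mem_Iio]; omega

theorem sec_inter {n : ℕ} (B R : Finset (Fin (n+1) → ℕ)) (k : ℕ) :
    sec (B ∩ R) k = sec B k ∩ sec R k := by
  classical
  ext u; simp [mem_sec]

theorem sec_sub {n d k : ℕ} {B : Finset (Fin (n+1) → ℕ)} (hB : B ⊆ mon (n+1) d) (hk : k ≤ d) :
    sec B k ⊆ mon n (d - k) := by
  intro u hu
  have := snoc_mem_mon.1 (hB (mem_sec.1 hu))
  rw [mem_mon]; omega

theorem sec_lx {n d k : ℕ} {L : Finset (Fin (n+1) → ℕ)} (hL : LxSeg (n+1) d L) (hk : k ≤ d) :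
    LxSeg n (d-k) (sec L k) := by
  refine ⟨sec_sub hL.1 hk, ?_⟩
  rintro u hu v hv ⟨i, hi, hi'⟩
  rw [mem_sec] at hu ⊢
  have hv := mem_mon.1 hv
  refine hL.2 _ hu _ (snoc_mem_mon.2 (by omega)) ⟨i.castSucc, ?_, by simpa using hi'⟩
  intro j hj
  obtain ⟨j', rfl⟩ : ∃ j' : Fin n, j = j'.castSucc :=
    ⟨⟨j, by have := Fin.lt_def.1 hj; simp at this; omega⟩, rfl⟩
  simpa using hi j' (by simpa using hj)

theorem sec_rv {n d k : ℕ} {L : Finset (Fin (n+1) → ℕ)} (hL : RvSeg (n+1) d L) (hk : k ≤ d) :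
    RvSeg n (d-k) (sec L k) := by
  refine ⟨sec_sub hL.1 hk, ?_⟩
  rintro u hu v hv ⟨i, hi, hi'⟩
  rw [mem_sec] at hu ⊢
  have hv := mem_mon.1 hv
  refine hL.2 _ hu _ (snoc_mem_mon.2 (by omega)) ⟨i.castSucc, ?_, by simpa using hi'⟩
  intro j hj
  induction j using Fin.lastCases with
  | last => simp
  | cast j => simpa using hi j (by simpa using hj)

theorem sec_rv_full {n d j k : ℕ} {R : Finset (Fin (n+1) → ℕ)} (hR : RvSeg (n+1) d R)
    (hjk : j < k) (hk : k ≤ d) (hne : (sec R k).Nonempty) : mon n (d - j) ⊆ sec R j := by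
  obtain ⟨u, hu⟩ := hne
  intro v hv
  rw [mem_sec] at hu ⊢
  have hv := mem_mon.1 hv
  refine hR.2 _ hu _ (snoc_mem_mon.2 (by omega)) ⟨Fin.last n, ?_, by simpa using hjk⟩
  intro i hi
  exact absurd (Fin.le_last i) (not_le.2 hi)

theorem sec_st {n d k : ℕ} {B : Finset (Fin (n+1) → ℕ)} (hB : StSt (n+1) d B) (hk : k ≤ d) :
    StSt n (d-k) (sec B k) := by
  refine ⟨sec_sub hB.1 hk, ?_⟩
  intro u hu v i j hij h1 h2 h3
  rw [mem_sec] at hu ⊢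
  refine hB.2 _ hu _ i.castSucc j.castSucc (by simpa using hij) (by simpa using h1)
    (by simpa using h2) ?_
  intro l hl hl'
  induction l using Fin.lastCases with
  | last => simp
  | cast l => simpa using h3 l (fun h => hl (by rw [h])) (fun h => hl' (by rw [h]))

theorem sec_st_mul {n d k : ℕ} {B : Finset (Fin (n+1) → ℕ)} (hB : StSt (n+1) d B)
    (u : Fin n → ℕ) (hu : u ∈ sec B (k+1)) (i : Fin n) : u + Pi.single i 1 ∈ sec B k := by
  rw [mem_sec] at hu ⊢
  refine hB.2 _ hu _ i.castSucc (Fin.last n) (Fin.castSucc_lt_last i) (by simp) (by simp) ?_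
  intro l hl hl'
  induction l using Fin.lastCases with
  | last => exact absurd rfl hl'
  | cast l =>
    have : l ≠ i := fun h => hl (by rw [h])
    simp [this]

theorem combP_step (n : ℕ) (hP : CombP (n+1)) : CombP (n+2) := by
  classical
  intro d B L R hB hL hR hcard
  have hex : ∀ k, ∃ C, k ≤ d → (LxSeg (n+1) (d-k) C ∧ C.card = (sec B k).card) := by
    intro k
    by_cases hk : k ≤ d
    · obtain ⟨C, hC⟩ := lx_exists (n+1) (d-k) (sec B k).card
        (Finset.card_le_card (sec_sub hB.1 hk))
      exact ⟨C, fun _ => hC⟩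
    · exact ⟨∅, fun h => absurd h hk⟩
  choose C hC using hex
  have hmul : ∀ k, k + 1 ≤ d → ∀ u ∈ C (k+1), u + Pi.single (Fin.last n) 1 ∈ C k := by
    intro k hk
    have e1 : d - k = d - (k+1) + 1 := by omega
    have h1 := hC (k+1) hk
    have h2 := hC k (by omega)
    rw [e1] at h2
    exact expand hP (d - (k+1)) (sec B (k+1)) (sec B k) (C (k+1)) (C k) (sec_st hB hk)
      (fun a ha i => sec_st_mul hB a ha i) h1.1 h2.1 h1.2 h2.2
  have hmulj : ∀ j k, k + j ≤ d → ∀ u ∈ C (k+j), u + Pi.single (Fin.last n) j ∈ C k := by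
    intro j
    induction j with
    | zero => intro k hk u hu; simpa using hu
    | succ j ih =>
      intro k hk u hu
      have := ih k (by omega) _ (hmul (k+j) hk u hu)
      rw [add_assoc, ← Pi.single_add, add_comm 1 j] at this
      exact this
  have hsumBL : ∑ k ∈ Finset.range (d+1), (sec L k).card
      ≤ ∑ k ∈ Finset.range (d+1), (C k).card := by
    rw [← card_eq_sum_sec L hL.1]
    refine hcard.trans ?_
    rw [card_eq_sum_sec B hB.1]
    apply Finset.sum_le_sum
    intro k hk
    rw [(hC k (by simpa [Nat.lt_succ_iff] using hk)).2]
  rw [card_eq_sum_sec (L ∩ R) (Finset.inter_subset_left.trans hL.1),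
    card_eq_sum_sec (B ∩ R) (Finset.inter_subset_left.trans hB.1)]
  simp only [sec_inter]
  have hstep : ∑ k ∈ Finset.range (d+1), (C k ∩ sec R k).card
      ≤ ∑ k ∈ Finset.range (d+1), (sec B k ∩ sec R k).card := by
    apply Finset.sum_le_sum
    intro k hk
    have hk : k ≤ d := by simpa [Nat.lt_succ_iff] using hk
    exact hP (d-k) _ _ _ (sec_st hB hk) (hC k hk).1 (sec_rv hR hk) (hC k hk).2.le
  refine le_trans ?_ hstep
  by_cases hall : ∀ k ≤ d, (sec R k).Nonempty → sec L k ⊆ C k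
  · apply Finset.sum_le_sum
    intro k hk
    have hk : k ≤ d := by simpa [Nat.lt_succ_iff] using hk
    by_cases hne : (sec R k).Nonempty
    · exact Finset.card_le_card (Finset.inter_subset_inter_right (hall k hk hne))
    · rw [Finset.not_nonempty_iff_eq_empty] at hne
      simp [hne]
  push Not at hall
  obtain ⟨k, hk, hne, hnot⟩ := hall
  obtain ⟨m, hmL, hmC⟩ := Finset.not_subset.1 hnot
  have hbig : ∀ j, k ≤ j → j ≤ d → C j ⊆ sec L j := by
    intro j hkj hj u hu
    obtain ⟨i, rfl⟩ := Nat.exists_eq_add_of_le hkj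
    have h1 := hmulj i k hj u hu
    have hCk := (hC k hk).1
    have hlt : lxlt m (u + Pi.single (Fin.last n) i) := by
      rcases lxlt_tri m (u + Pi.single (Fin.last n) i) with h | h | h
      · exact h
      · exact absurd (h ▸ h1) hmC
      · exact absurd (hCk.2 _ h1 m (sec_sub hL.1 hk hmL) h) hmC
    rw [mem_sec] at hmL ⊢
    have hms := snoc_mem_mon.1 (hL.1 hmL)
    have hus := mem_mon.1 ((hC (k+i) hj).1.1 hu)
    have hus' := mem_mon.1 (hCk.1 h1)
    refine hL.2 _ hmL _ (snoc_mem_mon.2 (by omega)) ?_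
    obtain ⟨l, hl, hl'⟩ := hlt
    have hll : l ≠ Fin.last n := by
      rintro rfl
      have hs : ∑ j, m j < ∑ j, (u + Pi.single (Fin.last n) i : Fin (n+1) → ℕ) j := by
        apply Finset.sum_lt_sum
        · intro j _
          rcases lt_or_eq_of_le (Fin.le_last j) with h | h
          · exact (hl j h).le
          · subst h; exact hl'.le
        · exact ⟨_, Finset.mem_univ _, hl'⟩
      omega
    have hpre : ∀ j ≤ l, (u + Pi.single (Fin.last n) i : Fin (n+1) → ℕ) j = u j := by
      intro j hj
      have : j ≠ Fin.last n := by
        rintro rfl; exact hll (le_antisymm (Fin.le_last l) hj)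
      simp [this]
    refine ⟨l.castSucc, ?_, ?_⟩
    · intro j hj
      obtain ⟨j', rfl⟩ : ∃ j' : Fin (n+1), j = j'.castSucc :=
        ⟨⟨j, by have := Fin.lt_def.1 hj; simp at this; omega⟩, rfl⟩
      have hj' : j' < l := by simpa using hj
      have := hl j' hj'
      rw [hpre j' hj'.le] at this
      simpa using this
    · rw [hpre l le_rfl] at hl'
      simpa using hl'
  have hcompl : ∑ k ∈ Finset.range (d+1), (C k \ sec R k).card
      ≤ ∑ k ∈ Finset.range (d+1), (sec L k \ sec R k).card := by
    apply Finset.sum_le_sum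
    intro j hj
    have hj : j ≤ d := by simpa [Nat.lt_succ_iff] using hj
    by_cases hkj : k ≤ j
    · exact Finset.card_le_card (Finset.sdiff_subset_sdiff (hbig j hkj hj) subset_rfl)
    · have := (hC j hj).1.1.trans (sec_rv_full hR (not_le.1 hkj) hk hne)
      rw [Finset.sdiff_eq_empty_iff_subset.2 this]; simp
  have e1 : ∀ X : ℕ → Finset (Fin (n+1) → ℕ), ∑ k ∈ Finset.range (d+1), (X k).card =
      ∑ k ∈ Finset.range (d+1), (X k ∩ sec R k).card +
      ∑ k ∈ Finset.range (d+1), (X k \ sec R k).card := by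
    intro X
    rw [← Finset.sum_add_distrib]
    exact Finset.sum_congr rfl (fun k _ => (Finset.card_inter_add_card_sdiff _ _).symm)
  rw [e1 C, e1 (sec L)] at hsumBL
  omega

theorem combP (n : ℕ) : CombP n := by
  induction n with
  | zero => exact combP_small 0 (by omega)
  | succ n ih =>
    cases n with
    | zero => exact combP_small 1 le_rfl
    | succ n => exact combP_step n ih

/-- Strongly stable sets meet opposite lex segments at most as much as lex segments. -/
theorem comb_main (n d : ℕ) (B L T : Finset (Fin n → ℕ)) (hB : StSt n d B) (hL : LxSeg n d L)
    (hT : T ⊆ mon n d) (hT' : ∀ u ∈ T, ∀ v ∈ mon n d, oplt u v → v ∈ T)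
    (hcard : L.card = B.card) : (B ∩ T).card ≤ (L ∩ T).card := by
  classical
  have hR : RvSeg n d (mon n d \ T) := by
    refine ⟨Finset.sdiff_subset, ?_⟩
    intro u hu v hv huv
    rw [Finset.mem_sdiff] at hu ⊢
    exact ⟨hv, fun h => hu.2 (hT' v h u hu.1 huv)⟩
  have := combP n d B L _ hB hL hR hcard.le
  have e : ∀ X ⊆ mon n d, X ∩ (mon n d \ T) = X \ T := by
    intro X hX; ext x; simp only [Finset.mem_inter, Finset.mem_sdiff]
    exact ⟨fun h => ⟨h.1, h.2.2⟩, fun h => ⟨h.1, hX h.1, h.2⟩⟩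
  rw [e L hL.1, e B hB.1] at this
  have h1 := Finset.card_inter_add_card_sdiff L T
  have h2 := Finset.card_inter_add_card_sdiff B T
  omega

end Comb

section Lin

variable {K n}

theorem semicont {σ A ι : Type} [CommRing A] [Algebra K A] [Fintype ι]
    (p : ι → MvPolynomial σ A) (ε : A →ₐ[K] K)
    (h : LinearIndependent K (fun i => MvPolynomial.map (ε : A →+* K) (p i))) :
    ∃ D : A, ε D ≠ 0 ∧ ∀ (A' : Type) [CommRing A'] [IsDomain A'] [Algebra K A']
      (η : A →ₐ[K] A'), η D ≠ 0 →
        LinearIndependent A' (fun i => MvPolynomial.map (η : A →+* A') (p i)) := by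
  classical
  obtain ⟨N, hN⟩ := LinearMap.exists_leftInverse_of_injective
    (Finsupp.linearCombination K (fun i => MvPolynomial.map (ε : A →+* K) (p i)))
    (LinearMap.ker_eq_bot.2 h)
  have hNv : ∀ i, N (MvPolynomial.map (ε : A →+* K) (p i)) = Finsupp.single i 1 := by
    intro i
    have := LinearMap.congr_fun hN (Finsupp.single i 1)
    simpa using this
  let NA : ∀ (A' : Type) [CommRing A'] [Algebra K A'], MvPolynomial σ A' →ₗ[A'] (ι → A') :=
    fun A' _ _ => (MvPolynomial.basisMonomials σ A').constr A'
      (fun m i => algebraMap K A' (N (monomial m 1) i))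
  have NAm : ∀ (A' : Type) [CommRing A'] [Algebra K A'] (m : σ →₀ ℕ) (a : A') (i : ι),
      NA A' (monomial m a) i = a * algebraMap K A' (N (monomial m 1) i) := by
    intro A' _ _ m a i
    have h1 : (monomial m a : MvPolynomial σ A') = a • MvPolynomial.basisMonomials σ A' m := by
      simp [MvPolynomial.smul_monomial]
    rw [h1, map_smul, Module.Basis.constr_basis]
    simp
  have nat : ∀ (A' : Type) [CommRing A'] [Algebra K A'] (η : A →ₐ[K] A')
      (q : MvPolynomial σ A) (i : ι),
      NA A' (MvPolynomial.map (η : A →+* A') q) i = η (NA A q i) := by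
    intro A' _ _ η q i
    induction q using MvPolynomial.induction_on' with
    | monomial m a => rw [map_monomial, NAm, NAm]; simp
    | add p q hp hq => simp only [map_add, Pi.add_apply, hp, hq]
  have NK : ∀ (q : MvPolynomial σ K) (i : ι), NA K q i = N q i := by
    intro q i
    induction q using MvPolynomial.induction_on' with
    | monomial m a =>
      rw [NAm]
      have h1 : (monomial m a : MvPolynomial σ K) = a • monomial m 1 := by
        simp [MvPolynomial.smul_monomial]
      rw [h1, map_smul]; simp
    | add p q hp hq => simp only [map_add, Pi.add_apply, hp, hq, Finsupp.add_apply]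
  let Q : Matrix ι ι A := Matrix.of fun i j => NA A (p i) j
  refine ⟨Q.det, ?_, ?_⟩
  · have h1 : ε Q.det = ((ε : A →+* K).mapMatrix Q).det := RingHom.map_det (ε : A →+* K) Q
    have h2 : (ε : A →+* K).mapMatrix Q = 1 := by
      ext i j
      have := nat K ε (p i) j
      rw [NK, hNv] at this
      simp only [RingHom.mapMatrix_apply, Matrix.map_apply, Q, Matrix.of_apply]
      erw [← this]
      rw [Finsupp.single_apply, Matrix.one_apply]
    rw [h1, h2]; simp
  · intro A' _ _ _ η hD
    rw [Fintype.linearIndependent_iff]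
    intro c hc
    have h1 : η Q.det = ((η : A →+* A').mapMatrix Q).det := RingHom.map_det (η : A →+* A') Q
    rw [h1] at hD
    have h3 : Matrix.vecMul c ((η : A →+* A').mapMatrix Q) = 0 := by
      funext j
      have := congrFun (congrArg (NA A') hc) j
      rw [map_sum, map_zero, Finset.sum_apply] at this
      simp only [map_smul, Pi.smul_apply, nat] at this
      simpa [Matrix.vecMul, dotProduct, Q] using this
    intro i
    exact congrFun (Matrix.eq_zero_of_vecMul_eq_zero hD h3) i

/-- `m` is the lex-leading exponent of `f`. -/
def IsLd {A : Type} [CommRing A] (f : MvPolynomial (Fin n) A) (m : Fin n →₀ ℕ) : Prop :=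
  m ∈ f.support ∧ ∀ m' ∈ f.support, m' = m ∨ lexLt n m' m

theorem lexLt_iff {a b : Fin n →₀ ℕ} : lexLt n a b ↔ toLex a < toLex b := Iff.rfl

theorem lexLt_iff_lxlt {a b : Fin n →₀ ℕ} : lexLt n a b ↔ lxlt (a : Fin n → ℕ) b := Iff.rfl

theorem oplexLt_iff_oplt {a b : Fin n →₀ ℕ} : oplexLt n a b ↔ oplt (a : Fin n → ℕ) b := Iff.rfl

theorem exists_isLd {A : Type} [CommRing A] (f : MvPolynomial (Fin n) A) (hf : f ≠ 0) :
    ∃ m, IsLd f m := by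
  obtain ⟨m, hm, hmax⟩ := Finset.exists_max_image f.support toLex
    (MvPolynomial.support_nonempty.2 hf)
  refine ⟨m, hm, fun m' hm' => ?_⟩
  rcases lt_or_eq_of_le (hmax m' hm') with h | h
  · exact Or.inr h
  · exact Or.inl (toLex.injective h)

theorem card_le_of_support {A ι : Type} [CommRing A] [Nontrivial A] [Fintype ι]
    (p : ι → MvPolynomial (Fin n) A) (hp : LinearIndependent A p) (Λ : Finset (Fin n →₀ ℕ))
    (h : ∀ f ∈ Submodule.span A (Set.range p), f ≠ 0 → ∃ m ∈ Λ, m ∈ f.support) :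
    Fintype.card ι ≤ Λ.card := by
  classical
  let T : (ι → A) →ₗ[A] (Λ → A) := LinearMap.pi (fun m : Λ =>
    (MvPolynomial.lcoeff A (m : Fin n →₀ ℕ)) ∘ₗ (Fintype.linearCombination A p))
  have := card_le_of_injective A T ?_
  · simpa using this
  rw [← LinearMap.ker_eq_bot, LinearMap.ker_eq_bot']
  intro c hc
  have hz : Fintype.linearCombination A p c = 0 := by
    by_contra hne
    obtain ⟨m, hm, hms⟩ := h _ (by
      rw [Fintype.linearCombination_apply]
      exact Submodule.sum_mem _ (fun i _ => Submodule.smul_mem _ _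
        (Submodule.subset_span ⟨i, rfl⟩))) hne
    have := congrFun hc ⟨m, hm⟩
    rw [MvPolynomial.mem_support_iff] at hms
    exact hms this
  rw [Fintype.linearCombination_apply] at hz
  exact funext (Fintype.linearIndependent_iff.1 hp c hz)

theorem card_le_finrank (V : Submodule K (PS K n)) [Module.Finite K V]
    (Λ : Finset (Fin n →₀ ℕ)) (h : ∀ m ∈ Λ, ∃ f ∈ V, IsLd f m) :
    Λ.card ≤ Module.finrank K V := by
  classical
  choose! f hfV hf using h
  have hli : LinearIndependent K (fun m : Λ => (⟨f m, hfV m m.2⟩ : V)) := by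
    rw [Fintype.linearIndependent_iff]
    intro c hc
    by_contra! hne
    obtain ⟨i, hi⟩ := hne
    obtain ⟨m, hm, hmax⟩ := Finset.exists_max_image (Finset.univ.filter (fun m : Λ => c m ≠ 0))
      (fun m => toLex (m : Fin n →₀ ℕ)) ⟨i, by simpa using hi⟩
    simp only [Finset.mem_filter, Finset.mem_univ, true_and] at hm hmax
    have h1 := congrArg (fun v : V => MvPolynomial.coeff (m : Fin n →₀ ℕ) (v : PS K n)) hc
    simp only [Submodule.coe_sum, Submodule.coe_smul, MvPolynomial.coeff_sum,
      MvPolynomial.coeff_smul, ZeroMemClass.coe_zero, MvPolynomial.coeff_zero] at h1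
    rw [Finset.sum_eq_single m] at h1
    · have h2 := (hf m m.2).1
      rw [MvPolynomial.mem_support_iff] at h2
      exact (mul_ne_zero hm h2) h1
    · intro b _ hb
      by_cases hcb : c b = 0
      · simp [hcb]
      have hle := hmax b hcb
      have : MvPolynomial.coeff (m : Fin n →₀ ℕ) (f b) = 0 := by
        by_contra hne
        rcases (hf b b.2).2 m (MvPolynomial.mem_support_iff.2 hne) with h | h
        · exact hb (Subtype.ext h.symm)
        · exact absurd (lexLt_iff.1 h) (not_lt.2 hle)
      simp [this]
    · intro h; exact absurd (Finset.mem_univ _) h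
  have := hli.fintype_card_le_finrank
  simpa using this

/-- Exponents of degree `d`. -/
def monos (n d : ℕ) : Finset (Fin n →₀ ℕ) :=
  (mon n d).map Finsupp.equivFunOnFinite.symm.toEmbedding

theorem mem_monos {d : ℕ} {m : Fin n →₀ ℕ} : m ∈ monos n d ↔ expDeg n m = d := by
  simp only [monos, Finset.mem_map_equiv, Equiv.symm_symm, mem_mon, expDeg]
  rfl

theorem mem_hom {A : Type} [CommRing A] {d : ℕ} {f : MvPolynomial (Fin n) A} :
    f ∈ homogeneousSubmodule (Fin n) A d ↔ ∀ m ∈ f.support, expDeg n m = d := by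
  rw [mem_homogeneousSubmodule]
  constructor
  · intro h m hm
    have := h (MvPolynomial.mem_support_iff.1 hm)
    rw [← this, Finsupp.weight_apply, Finsupp.sum_fintype _ _ (by simp), expDeg]
    simp
  · intro h m hm
    have := h m (MvPolynomial.mem_support_iff.2 hm)
    rw [← this, Finsupp.weight_apply, Finsupp.sum_fintype _ _ (by simp), expDeg]
    simp

theorem hom_finite (d : ℕ) : Module.Finite K (homogeneousSubmodule (Fin n) K d) := by
  classical
  have : homogeneousSubmodule (Fin n) K d = Submodule.span K
      (((monos n d).image (fun m => monomial m (1:K)) : Finset (PS K n)) : Set (PS K n)) := by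
    apply le_antisymm
    · intro f hf
      rw [f.as_sum]
      refine Submodule.sum_mem _ (fun m hm => ?_)
      have h1 : (monomial m (coeff m f) : PS K n) = coeff m f • monomial m 1 := by
        simp [MvPolynomial.smul_monomial]
      rw [h1]
      refine Submodule.smul_mem _ _ (Submodule.subset_span ?_)
      simp only [Finset.coe_image]
      exact ⟨m, mem_monos.2 (mem_hom.1 hf m hm), rfl⟩
    · rw [Submodule.span_le]
      intro f hf
      simp only [Finset.coe_image] at hf
      obtain ⟨m, hm, rfl⟩ := hf
      refine mem_hom.2 (fun m' hm' => ?_)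
      have := MvPolynomial.support_monomial_subset hm'
      rw [Finset.mem_singleton] at this
      rw [this]; exact mem_monos.1 hm
  rw [this]
  exact Module.Finite.span_finset K _

theorem finite_of_le {d : ℕ} {V : Submodule K (PS K n)}
    (h : V ≤ homogeneousSubmodule (Fin n) K d) : Module.Finite K V := by
  have := hom_finite (K := K) (n := n) d
  exact Submodule.finiteDimensional_of_le h

/-- The leading exponents of a subspace in degree `d`. -/
def inM (d : ℕ) (V : Submodule K (PS K n)) : Finset (Fin n →₀ ℕ) := by
  classical
  exact (monos n d).filter (fun m => ∃ f ∈ V, IsLd f m)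

theorem mem_inM {d : ℕ} {V : Submodule K (PS K n)} {m : Fin n →₀ ℕ} :
    m ∈ inM d V ↔ expDeg n m = d ∧ ∃ f ∈ V, IsLd f m := by
  classical
  simp [inM, mem_monos]

theorem card_inM {d : ℕ} {V : Submodule K (PS K n)}
    (h : V ≤ homogeneousSubmodule (Fin n) K d) : (inM d V).card = Module.finrank K V := by
  have := finite_of_le h
  apply le_antisymm
  · exact card_le_finrank V _ (fun m hm => (mem_inM.1 hm).2)
  · have hb := (Module.finBasis K V).linearIndependent
    have hb' := hb.map' V.subtype (by simp)
    have := card_le_of_support _ hb' (inM d V) ?_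
    · simpa using this
    intro f hf hf0
    have hfV : f ∈ V := by
      refine Submodule.span_le.2 ?_ hf
      rintro _ ⟨i, rfl⟩
      simp
    obtain ⟨m, hm⟩ := exists_isLd f hf0
    exact ⟨m, mem_inM.2 ⟨mem_hom.1 (h hfV) m hm.1, f, hfV, hm⟩, hm.1⟩

/-- Span of the monomials in `B`. -/
def mS (B : Finset (Fin n →₀ ℕ)) : Submodule K (PS K n) :=
  MvPolynomial.restrictSupport K (B : Set (Fin n →₀ ℕ))

theorem mem_mS {B : Finset (Fin n →₀ ℕ)} {f : PS K n} :
    f ∈ mS B ↔ ∀ m ∈ f.support, m ∈ B := by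
  rw [mS, mem_restrictSupport_iff]; rfl

theorem mS_le_hom {d : ℕ} {B : Finset (Fin n →₀ ℕ)} (hB : B ⊆ monos n d) :
    (mS B : Submodule K (PS K n)) ≤ homogeneousSubmodule (Fin n) K d := by
  intro f hf
  exact mem_hom.2 (fun m hm => mem_monos.1 (hB (mem_mS.1 hf m hm)))

theorem finrank_mS (B : Finset (Fin n →₀ ℕ)) :
    Module.finrank K (mS B : Submodule K (PS K n)) = B.card := by
  have := Module.finrank_eq_card_basis
    (MvPolynomial.basisRestrictSupport K (B : Set (Fin n →₀ ℕ)))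
  rw [mS, this]; simp

theorem mS_finite (B : Finset (Fin n →₀ ℕ)) :
    Module.Finite K (mS B : Submodule K (PS K n)) :=
  Module.Finite.of_basis (MvPolynomial.basisRestrictSupport K (B : Set (Fin n →₀ ℕ)))

theorem monomial_mem_mS {B : Finset (Fin n →₀ ℕ)} {m : Fin n →₀ ℕ} (hm : m ∈ B) (c : K) :
    monomial m c ∈ (mS B : Submodule K (PS K n)) := by
  refine mem_mS.2 (fun m' hm' => ?_)
  have := MvPolynomial.support_monomial_subset hm'
  rw [Finset.mem_singleton] at this
  rwa [this]

theorem mS_sup (B C : Finset (Fin n →₀ ℕ)) [DecidableEq (Fin n →₀ ℕ)] :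
    (mS B ⊔ mS C : Submodule K (PS K n)) = mS (B ∪ C) := by
  apply le_antisymm
  · apply sup_le
    · intro f hf; exact mem_mS.2 fun m hm => Finset.mem_union_left _ (mem_mS.1 hf m hm)
    · intro f hf; exact mem_mS.2 fun m hm => Finset.mem_union_right _ (mem_mS.1 hf m hm)
  · intro f hf
    rw [f.as_sum]
    refine Submodule.sum_mem _ (fun m hm => ?_)
    rcases Finset.mem_union.1 (mem_mS.1 hf m hm) with h | h
    · exact Submodule.mem_sup_left (monomial_mem_mS h _)
    · exact Submodule.mem_sup_right (monomial_mem_mS h _)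

end Lin

section Act

variable {K n}

/-- The change of coordinates attached to a matrix with entries in a `K`-algebra. -/
def genChange {A : Type} [CommRing A] [Algebra K A] (M : Matrix (Fin n) (Fin n) A) :
    PS K n →ₐ[K] MvPolynomial (Fin n) A :=
  MvPolynomial.aeval (fun i => ∑ j, M j i • MvPolynomial.X j)

theorem coordChange_eq (g : GL (Fin n) K) : coordChange K n g = genChange (g : Matrix _ _ K) := rfl

theorem coordChange_X (g : GL (Fin n) K) (i : Fin n) : coordChange K n g (X i) =
    ∑ j, ((g : Matrix (Fin n) (Fin n) K) j i) • MvPolynomial.X j := by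
  simp [coordChange]

theorem coordChange_mul (g h : GL (Fin n) K) (f : PS K n) :
    coordChange K n (g * h) f = coordChange K n g (coordChange K n h f) := by
  have : coordChange K n (g * h) = (coordChange K n g).comp (coordChange K n h) := by
    apply MvPolynomial.algHom_ext
    intro i
    rw [AlgHom.comp_apply, coordChange_X, coordChange_X, map_sum]
    simp only [map_smul, coordChange_X, Finset.smul_sum, smul_smul]
    rw [Finset.sum_comm]
    apply Finset.sum_congr rfl
    intro k _
    rw [← Finset.sum_smul]
    congr 1
    rw [Matrix.GeneralLinearGroup.coe_mul, Matrix.mul_apply]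
    exact Finset.sum_congr rfl (fun _ _ => mul_comm _ _)
  rw [this]; rfl

theorem coordChange_one (f : PS K n) : coordChange K n 1 f = f := by
  have : coordChange K n 1 = AlgHom.id K _ := by
    apply MvPolynomial.algHom_ext
    intro i
    rw [coordChange_X]
    simp [Matrix.one_apply, ite_smul]
  rw [this]; rfl

theorem coordChange_inv_apply (g : GL (Fin n) K) (f : PS K n) :
    coordChange K n g⁻¹ (coordChange K n g f) = f := by
  rw [← coordChange_mul, inv_mul_cancel, coordChange_one]

theorem coordChange_apply_inv (g : GL (Fin n) K) (f : PS K n) :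
    coordChange K n g (coordChange K n g⁻¹ f) = f := by
  rw [← coordChange_mul, mul_inv_cancel, coordChange_one]

theorem genChange_hom {A : Type} [CommRing A] [Algebra K A] (M : Matrix (Fin n) (Fin n) A)
    {d : ℕ} {f : PS K n} (hf : f ∈ homogeneousSubmodule (Fin n) K d) :
    genChange M f ∈ homogeneousSubmodule (Fin n) A d := by
  rw [mem_homogeneousSubmodule] at hf ⊢
  have h1 : ∀ i, (∑ j, M j i • (X j : MvPolynomial (Fin n) A)).IsHomogeneous 1 := by
    intro i
    apply MvPolynomial.IsHomogeneous.sum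
    intro j _
    rw [MvPolynomial.smul_eq_C_mul]
    simpa using (isHomogeneous_C (Fin n) (M j i)).mul (isHomogeneous_X A j)
  have := hf.aeval _ h1
  simpa [genChange] using this

theorem coordChange_hom (g : GL (Fin n) K) {d : ℕ} {f : PS K n}
    (hf : f ∈ homogeneousSubmodule (Fin n) K d) :
    coordChange K n g f ∈ homogeneousSubmodule (Fin n) K d := genChange_hom _ hf

/-- The action of `g` on subspaces. -/
def act (g : GL (Fin n) K) (V : Submodule K (PS K n)) : Submodule K (PS K n) :=
  V.map (coordChange K n g).toLinearMap

theorem mem_act {g : GL (Fin n) K} {V : Submodule K (PS K n)} {f : PS K n} :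
    f ∈ act g V ↔ ∃ v ∈ V, coordChange K n g v = f := Iff.rfl

theorem act_mul (g h : GL (Fin n) K) (V : Submodule K (PS K n)) :
    act (g * h) V = act g (act h V) := by
  ext f
  simp only [mem_act]
  constructor
  · rintro ⟨v, hv, rfl⟩; exact ⟨_, ⟨v, hv, rfl⟩, (coordChange_mul g h v).symm⟩
  · rintro ⟨_, ⟨v, hv, rfl⟩, rfl⟩; exact ⟨v, hv, coordChange_mul g h v⟩

theorem act_one (V : Submodule K (PS K n)) : act 1 V = V := by
  ext f
  simp only [mem_act, coordChange_one]
  simp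

theorem act_sup (g : GL (Fin n) K) (V W : Submodule K (PS K n)) :
    act g (V ⊔ W) = act g V ⊔ act g W := Submodule.map_sup _ _ _

theorem coordChange_injective (g : GL (Fin n) K) : Function.Injective (coordChange K n g) :=
  Function.LeftInverse.injective (coordChange_inv_apply g)

theorem finrank_act (g : GL (Fin n) K) (V : Submodule K (PS K n)) :
    Module.finrank K (act g V) = Module.finrank K V :=
  (Submodule.equivMapOfInjective _ (coordChange_injective g) V).finrank_eq.symm

theorem act_finite (g : GL (Fin n) K) (V : Submodule K (PS K n)) [Module.Finite K V] :
    Module.Finite K (act g V) := by unfold act; infer_instance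

theorem act_le_hom {d : ℕ} {V : Submodule K (PS K n)}
    (h : V ≤ homogeneousSubmodule (Fin n) K d) (g : GL (Fin n) K) :
    act g V ≤ homogeneousSubmodule (Fin n) K d := by
  rintro f hf
  obtain ⟨v, hv, rfl⟩ := mem_act.1 hf
  exact coordChange_hom g (h hv)

theorem semi_span {A : Type} [CommRing A] [Algebra K A] (ε : A →ₐ[K] K) (s : Set (PS K n))
    [Module.Finite K (Submodule.span K s)] (P : Set (MvPolynomial (Fin n) A))
    (h : ∀ v ∈ s, ∃ q ∈ P, MvPolynomial.map (ε : A →+* K) q = v) :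
    ∃ p : Fin (Module.finrank K (Submodule.span K s)) → MvPolynomial (Fin n) A,
      (∀ i, p i ∈ P) ∧ ∃ D : A, ε D ≠ 0 ∧
        ∀ (A' : Type) [CommRing A'] [IsDomain A'] [Algebra K A'] (η : A →ₐ[K] A'), η D ≠ 0 →
          LinearIndependent A' (fun i => MvPolynomial.map (η : A →+* A') (p i)) := by
  obtain ⟨f, hfs, _, hli⟩ := Submodule.exists_fun_fin_finrank_span_eq K s
  choose q hq hqv using h
  refine ⟨fun i => q (f i) (hfs i), fun i => hq _ _, ?_⟩
  apply semicont
  simpa only [hqv] using hli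

/-- `V'` is a degeneration of `V` as far as dimensions of general sums are concerned. -/
def Dom (V V' : Submodule K (PS K n)) : Prop :=
  ∀ (W : Submodule K (PS K n)), Module.Finite K W → ∀ g : GL (Fin n) K, ∃ g' : GL (Fin n) K,
    Module.finrank K ↥(W ⊔ act g V') ≤ Module.finrank K ↥(W ⊔ act g' V)

theorem Dom.trans {V V' V'' : Submodule K (PS K n)} (h : Dom V V') (h' : Dom V' V'') :
    Dom V V'' := by
  intro W hW g
  obtain ⟨g1, h1⟩ := h' W hW g
  obtain ⟨g2, h2⟩ := h W hW g1
  exact ⟨g2, h1.trans h2⟩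

theorem dom_act (h : GL (Fin n) K) (V : Submodule K (PS K n)) : Dom V (act h V) := by
  intro W hW g
  exact ⟨g * h, by rw [act_mul]⟩

/-- A weight vector representing lex in degree `d`. -/
def wt (d : ℕ) (m : Fin n →₀ ℕ) : ℕ := ∑ i, m i * (d + 1) ^ (n - (i : ℕ))

theorem wt_lt {d : ℕ} {u v : Fin n →₀ ℕ} (hu : expDeg n u = d) (h : lexLt n u v) :
    wt d u < wt d v := by
  obtain ⟨i, hi, hi'⟩ := lexLt_iff_lxlt.1 h
  have key : ∑ j, u j * (d + 1) ^ (n - (j : ℕ)) + (d+1) ^ (n - (i : ℕ)) ≤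
      ∑ j, (v j * (d + 1) ^ (n - (j : ℕ)) + u j * (d + 1) ^ (n - (i : ℕ) - 1)) := by
    have h1 : ∑ j, (u j * (d + 1) ^ (n - (j : ℕ)) +
        if j = i then (d+1) ^ (n - (i : ℕ)) else 0) =
        ∑ j, u j * (d + 1) ^ (n - (j : ℕ)) + (d+1) ^ (n - (i : ℕ)) := by
      rw [Finset.sum_add_distrib]; simp
    rw [← h1]
    apply Finset.sum_le_sum
    intro j _
    rcases lt_trichotomy j i with hj | hj | hj
    · rw [if_neg (ne_of_lt hj), hi j hj]; omega
    · subst hj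
      rw [if_pos rfl, ← Nat.succ_mul]
      exact (Nat.mul_le_mul_right _ hi').trans (Nat.le_add_right _ _)
    · rw [if_neg (ne_of_gt hj)]
      have : (d+1) ^ (n - (j : ℕ)) ≤ (d + 1) ^ (n - (i : ℕ) - 1) :=
        Nat.pow_le_pow_right (by omega) (by have := Fin.lt_def.1 hj; omega)
      have := Nat.mul_le_mul_left (u j) this
      omega
  rw [Finset.sum_add_distrib, ← Finset.sum_mul] at key
  have hd : ∑ j, u j = d := hu
  rw [hd] at key
  have h2 : (d+1) ^ (n - (i : ℕ)) = (d + 1) * (d + 1) ^ (n - (i : ℕ) - 1) := by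
    rw [← Nat.pow_succ']; congr 1; have := i.2; omega
  have h3 : 0 < (d + 1) ^ (n - (i : ℕ) - 1) := by positivity
  rw [h2] at key
  unfold wt
  nlinarith

/-- Diagonal change of coordinates. -/
def diagGL (δ : Fin n → K) (h : ∀ i, δ i ≠ 0) : GL (Fin n) K :=
  Matrix.GeneralLinearGroup.mkOfDetNeZero (Matrix.diagonal δ)
    (by rw [Matrix.det_diagonal]; exact Finset.prod_ne_zero_iff.2 (fun i _ => h i))

theorem coordChange_diag (δ : Fin n → K) (h : ∀ i, δ i ≠ 0) (m : Fin n →₀ ℕ) (c : K) :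
    coordChange K n (diagGL δ h) (monomial m c) = monomial m (c * ∏ i, δ i ^ m i) := by
  have h1 : ∀ i, coordChange K n (diagGL δ h) (X i) = C (δ i) * X i := by
    intro i
    rw [coordChange_X]
    simp [diagGL, Matrix.GeneralLinearGroup.mkOfDetNeZero, Matrix.diagonal_apply,
      MvPolynomial.smul_eq_C_mul]
  rw [monomial_eq, map_mul, Finsupp.prod_fintype _ _ (by simp), map_prod]
  simp only [map_pow, h1, mul_pow, Finset.prod_mul_distrib]
  rw [monomial_eq, Finsupp.prod_fintype _ _ (by simp)]
  rw [show coordChange K n (diagGL δ h) (C c) = C c from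
    AlgHom.commutes (coordChange K n (diagGL δ h)) c]
  simp [mul_assoc]

theorem dom_init [Infinite K] {d : ℕ} {V : Submodule K (PS K n)}
    (hV : V ≤ homogeneousSubmodule (Fin n) K d) : Dom V (mS (inM d V)) := by
  classical
  intro W hW g
  have hVf := finite_of_le hV
  set s : Set (PS K n) := (W : Set (PS K n)) ∪
    (fun m => coordChange K n g (monomial m 1)) '' (inM d V : Set (Fin n →₀ ℕ)) with hs
  have hspan : W ⊔ act g (mS (inM d V)) = Submodule.span K s := by
    rw [hs, Submodule.span_union, Submodule.span_eq]
    congr 1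
    rw [act, mS, restrictSupport_eq_span, Submodule.map_span, ← Set.image_comp]
    rfl
  have hfin : Module.Finite K (Submodule.span K s) := by
    rw [← hspan]
    have := mS_finite (K := K) (inM d V)
    have := act_finite g (mS (inM d V))
    infer_instance
  let ev : K → (Polynomial K →ₐ[K] K) := fun t => Polynomial.aeval t
  let D : ∀ t : K, t ≠ 0 → GL (Fin n) K := fun t ht =>
    diagGL (fun i => (t⁻¹) ^ ((d+1) ^ (n - (i : ℕ)))) (fun i => pow_ne_zero _ (inv_ne_zero ht))
  have hD : ∀ t ht m c, coordChange K n (D t ht) (monomial m c)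
      = monomial m (c * (t⁻¹) ^ wt d m) := by
    intro t ht m c
    rw [coordChange_diag]
    congr 2
    rw [wt, ← Finset.prod_pow_eq_pow_sum]
    refine Finset.prod_congr rfl (fun i _ => ?_)
    rw [← pow_mul, mul_comm]
  have hmapC : ∀ t (q : PS K n), MvPolynomial.map (ev t : Polynomial K →+* K)
      (MvPolynomial.map Polynomial.C q) = q := by
    intro t q
    rw [MvPolynomial.map_map]
    have : (ev t : Polynomial K →+* K).comp Polynomial.C = RingHom.id K := by
      ext a; simp [ev]
    rw [this, MvPolynomial.map_id]
  obtain ⟨p, hp, D0, hD0, hli⟩ := semi_span (ev 0) s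
    {q | ∀ t (ht : t ≠ 0), MvPolynomial.map (ev t : Polynomial K →+* K) q ∈
      W ⊔ act (g * D t ht) V} (by
    rintro v (hv | ⟨m, hm, rfl⟩)
    · refine ⟨MvPolynomial.map Polynomial.C v, ?_, hmapC 0 v⟩
      intro t ht
      rw [hmapC]
      exact Submodule.mem_sup_left hv
    · obtain ⟨hmd, f, hfV, hf⟩ := mem_inM.1 hm
      have hc := MvPolynomial.mem_support_iff.1 hf.1
      set q : MvPolynomial (Fin n) (Polynomial K) := ∑ m' ∈ f.support,
        C (Polynomial.C ((coeff m f)⁻¹ * coeff m' f) * Polynomial.X ^ (wt d m - wt d m')) *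
          MvPolynomial.map Polynomial.C (coordChange K n g (monomial m' 1)) with hq
      have hqt : ∀ t, MvPolynomial.map (ev t : Polynomial K →+* K) q = ∑ m' ∈ f.support,
          ((coeff m f)⁻¹ * coeff m' f * t ^ (wt d m - wt d m')) •
            coordChange K n g (monomial m' 1) := by
        intro t
        rw [hq, map_sum]
        refine Finset.sum_congr rfl (fun m' _ => ?_)
        rw [map_mul, hmapC, map_C, MvPolynomial.smul_eq_C_mul]
        simp [ev]
      have hlt : ∀ m' ∈ f.support, m' ≠ m → wt d m' < wt d m := by
        intro m' hm' hne
        exact wt_lt (mem_hom.1 (hV hfV) m' hm') ((hf.2 m' hm').resolve_left hne)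
      refine ⟨q, ?_, ?_⟩
      · intro t ht
        rw [hqt]
        apply Submodule.mem_sup_right
        rw [act_mul]
        refine mem_act.2 ⟨((coeff m f)⁻¹ * t ^ wt d m) • coordChange K n (D t ht) f,
          Submodule.smul_mem _ _ ⟨f, hfV, rfl⟩, ?_⟩
        have hDf : coordChange K n (D t ht) f =
            ∑ m' ∈ f.support, monomial m' (coeff m' f * t⁻¹ ^ wt d m') := by
          conv_lhs => rw [f.as_sum]
          rw [map_sum]
          exact Finset.sum_congr rfl (fun m' _ => hD t ht m' _)
        rw [map_smul, hDf, map_sum, Finset.smul_sum]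
        refine Finset.sum_congr rfl (fun m' hm' => ?_)
        have h1 : (monomial m' (coeff m' f * t⁻¹ ^ wt d m') : PS K n) =
            (coeff m' f * t⁻¹ ^ wt d m') • monomial m' 1 := by
          simp [MvPolynomial.smul_monomial]
        rw [h1, map_smul, smul_smul]
        congr 1
        have hle : wt d m' ≤ wt d m := by
          by_cases h : m' = m
          · rw [h]
          · exact (hlt m' hm' h).le
        rw [pow_sub₀ t ht hle, inv_pow]
        ring
      · rw [hqt, Finset.sum_eq_single m]
        · simp [inv_mul_cancel₀ hc]
        · intro m' hm' hne
          have := hlt m' hm' hne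
          rw [zero_pow (by omega)]; simp
        · intro h; exact absurd hf.1 h)
  have hD0' : D0 * Polynomial.X ≠ 0 := by
    apply mul_ne_zero _ Polynomial.X_ne_zero
    rintro rfl; simp at hD0
  obtain ⟨t, ht⟩ := Polynomial.exists_eval_ne_zero_of_natDegree_lt_card (D0 * Polynomial.X) hD0'
    ((Cardinal.natCast_lt_aleph0).trans_le (Cardinal.aleph0_le_mk K))
  rw [Polynomial.eval_mul, Polynomial.eval_X] at ht
  have ht0 := right_ne_zero_of_mul ht
  have hl := hli K (ev t) (by simpa [ev, Polynomial.aeval_def] using left_ne_zero_of_mul ht)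
  refine ⟨g * D t ht0, ?_⟩
  have := act_finite (g * D t ht0) V
  rw [hspan]
  have hl' : LinearIndependent K (fun i => (⟨_, hp i t ht0⟩ : ↥(W ⊔ act (g * D t ht0) V))) :=
    LinearIndependent.of_comp (W ⊔ act (g * D t ht0) V).subtype hl
  simpa using hl'.fintype_card_le_finrank

end Act

section Stable

variable {K n}

/-- Elementary change of coordinates `x_j ↦ x_j + c x_i`. -/
def transGL (i j : Fin n) (hij : i ≠ j) (c : K) : GL (Fin n) K :=
  Matrix.GeneralLinearGroup.mkOfDetNeZero (Matrix.transvection i j c)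
    (by rw [Matrix.det_transvection_of_ne i j hij]; exact one_ne_zero)

theorem transGL_mul (i j : Fin n) (hij : i ≠ j) (c : K) :
    transGL i j hij (-c) * transGL i j hij c = 1 := by
  apply Units.ext
  have := Matrix.transvection_mul_transvection_same i j hij (-c) c
  rw [neg_add_cancel, Matrix.transvection_zero] at this
  exact this

theorem coordChange_trans_X (i j : Fin n) (hij : i ≠ j) (c : K) (k : Fin n) :
    coordChange K n (transGL i j hij c) (X k) = if k = j then C c * X i + X j else X k := by
  rw [coordChange_X]
  have h1 : ∀ l, ((transGL i j hij c : GL (Fin n) K) : Matrix (Fin n) (Fin n) K) l k =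
      (if l = k then 1 else 0) + (if i = l ∧ j = k then c else 0) := by
    intro l
    simp [transGL, Matrix.GeneralLinearGroup.mkOfDetNeZero, Matrix.transvection,
      Matrix.one_apply, Matrix.single_apply]
  simp only [h1, add_smul, Finset.sum_add_distrib, ite_smul, one_smul, zero_smul,
    Finset.sum_ite_eq', Finset.mem_univ, if_true]
  by_cases hk : k = j
  · subst hk
    simp [MvPolynomial.smul_eq_C_mul, add_comm]
  · simp [hk, Ne.symm hk]

/-- Moving `k` units of exponent from `j` to `i`. -/
def sh (i j : Fin n) (m : Fin n →₀ ℕ) (k : ℕ) : Fin n →₀ ℕ :=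
  m.erase j + Finsupp.single i k + Finsupp.single j (m j - k)

theorem coordChange_trans_monomial (i j : Fin n) (hij : i ≠ j) (c : K) (m : Fin n →₀ ℕ) :
    coordChange K n (transGL i j hij c) (monomial m 1) =
      ∑ k ∈ Finset.range (m j + 1), monomial (sh i j m k) (c ^ k * ((m j).choose k : K)) := by
  have hm : (monomial m 1 : PS K n) = monomial (m.erase j) 1 * X j ^ m j := by
    rw [X_pow_eq_monomial, monomial_mul, mul_one, Finsupp.erase_add_single]
  have hfix : coordChange K n (transGL i j hij c) (monomial (m.erase j) 1)
      = monomial (m.erase j) 1 := by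
    rw [monomial_eq, map_mul, Finsupp.prod, map_prod]
    congr 1
    · simp
    · refine Finset.prod_congr rfl (fun k hk => ?_)
      have : k ≠ j := by
        rintro rfl
        simp at hk
      rw [map_pow, coordChange_trans_X, if_neg this]
  rw [hm, map_mul, hfix, map_pow, coordChange_trans_X, if_pos rfl, add_pow, Finset.mul_sum]
  refine Finset.sum_congr rfl (fun k _ => ?_)
  rw [mul_pow, ← C_pow, X_pow_eq_monomial, X_pow_eq_monomial, C_mul_monomial, monomial_mul]
  rw [show ((m j).choose k : PS K n) = C ((m j).choose k : K) by simp, mul_comm (monomial _ _) (C _),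
    C_mul_monomial, monomial_mul, sh, add_assoc]
  congr 1
  ring

theorem sh_zero (i j : Fin n) (m : Fin n →₀ ℕ) : sh i j m 0 = m := by
  simp [sh, Finsupp.erase_add_single]

theorem sh_apply_i (i j : Fin n) (hij : i ≠ j) (m : Fin n →₀ ℕ) (k : ℕ) :
    sh i j m k i = m i + k := by
  simp [sh, hij]

theorem sh_apply_j (i j : Fin n) (hij : i ≠ j) (m : Fin n →₀ ℕ) (k : ℕ) :
    sh i j m k j = m j - k := by
  simp [sh, hij]

theorem sh_apply_ne (i j : Fin n) (m : Fin n →₀ ℕ) (k : ℕ) (l : Fin n) (hi : l ≠ i)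
    (hj : l ≠ j) : sh i j m k l = m l := by
  simp [sh, hi, hj]

theorem sh_mono (i j : Fin n) (hij : i < j) (m : Fin n →₀ ℕ) {k k' : ℕ} (h : k ≤ k') :
    toLex (sh i j m k) ≤ toLex (sh i j m k') := by
  rcases lt_or_eq_of_le h with h | h
  · apply le_of_lt
    rw [← lexLt_iff, lexLt_iff_lxlt]
    refine ⟨i, ?_, ?_⟩
    · intro l hl
      rw [sh_apply_ne i j m k l hl.ne (hl.trans hij).ne,
        sh_apply_ne i j m k' l hl.ne (hl.trans hij).ne]
    · rw [sh_apply_i _ _ hij.ne, sh_apply_i _ _ hij.ne]; omega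
  · rw [h]

/-- Polynomials all of whose monomials are at least `p`. -/
def UPs (p : Fin n →₀ ℕ) : Submodule K (PS K n) :=
  MvPolynomial.restrictSupport K {m | toLex p ≤ toLex m}

/-- Polynomials all of whose monomials are smaller than `p`. -/
def LOs (p : Fin n →₀ ℕ) : Submodule K (PS K n) :=
  MvPolynomial.restrictSupport K {m | toLex m < toLex p}

theorem mem_UPs {p : Fin n →₀ ℕ} {f : PS K n} :
    f ∈ UPs p ↔ ∀ m ∈ f.support, toLex p ≤ toLex m := by
  rw [UPs, mem_restrictSupport_iff]; rfl

theorem mem_LOs {p : Fin n →₀ ℕ} {f : PS K n} :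
    f ∈ LOs p ↔ ∀ m ∈ f.support, toLex m < toLex p := by
  rw [LOs, mem_restrictSupport_iff]; rfl

theorem monomial_mem_UPs {p m : Fin n →₀ ℕ} (h : toLex p ≤ toLex m) (c : K) :
    (monomial m c : PS K n) ∈ UPs p := by
  rw [UPs, monomial_mem_restrictSupport]; exact Or.inl h

theorem monomial_mem_LOs {p m : Fin n →₀ ℕ} (h : toLex m < toLex p) (c : K) :
    (monomial m c : PS K n) ∈ LOs p := by
  rw [LOs, monomial_mem_restrictSupport]; exact Or.inl h

theorem eq_zero_of_UPs_LOs {p : Fin n →₀ ℕ} {f : PS K n} (h1 : f ∈ UPs p) (h2 : f ∈ LOs p) :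
    f = 0 := by
  rw [← MvPolynomial.support_eq_empty, Finset.eq_empty_iff_forall_notMem]
  intro m hm
  exact absurd (mem_LOs.1 h2 m hm) (not_lt.2 (mem_UPs.1 h1 m hm))

theorem trans_UPs (i j : Fin n) (hij : i < j) (c : K) (p : Fin n →₀ ℕ) {f : PS K n}
    (hf : f ∈ UPs p) : coordChange K n (transGL i j hij.ne c) f ∈ UPs p := by
  rw [f.as_sum, map_sum]
  refine Submodule.sum_mem _ (fun m hm => ?_)
  have h1 : (monomial m (coeff m f) : PS K n) = coeff m f • monomial m 1 := by
    simp [MvPolynomial.smul_monomial]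
  rw [h1, map_smul, coordChange_trans_monomial]
  refine Submodule.smul_mem _ _ (Submodule.sum_mem _ (fun k _ => monomial_mem_UPs ?_ _))
  refine (mem_UPs.1 hf m hm).trans ?_
  have := sh_mono i j hij m (Nat.zero_le k)
  rwa [sh_zero] at this

theorem trans_sub_UPs (i j : Fin n) (hij : i < j) (c : K) (u : Fin n →₀ ℕ) :
    coordChange K n (transGL i j hij.ne c) (monomial u 1) - monomial u 1 ∈ UPs (sh i j u 1) := by
  rw [coordChange_trans_monomial, Finset.sum_range_succ']
  simp only [sh_zero, pow_zero, Nat.choose_zero_right, Nat.cast_one, mul_one, add_sub_cancel_right]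
  refine Submodule.sum_mem _ (fun k _ => monomial_mem_UPs ?_ _)
  exact sh_mono i j hij u (by omega)

theorem trans_coeff (i j : Fin n) (hij : i ≠ j) (c : K) (u : Fin n →₀ ℕ) (hu : 0 < u j) :
    coeff (sh i j u 1) (coordChange K n (transGL i j hij c) (monomial u 1)) = c * u j := by
  rw [coordChange_trans_monomial, coeff_sum, Finset.sum_eq_single 1]
  · simp
  · intro k _ hk
    rw [coeff_monomial, if_neg]
    intro h
    have := DFunLike.congr_fun h i
    rw [sh_apply_i _ _ hij, sh_apply_i _ _ hij] at this
    omega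
  · intro h; simp at h; omega

theorem finrank_add_le {U X Y : Submodule K (PS K n)} [Module.Finite K U] (hX : X ≤ U)
    (hY : Y ≤ U) (h : X ⊓ Y = ⊥) :
    Module.finrank K X + Module.finrank K Y ≤ Module.finrank K U := by
  have := Submodule.finiteDimensional_of_le hX
  have := Submodule.finiteDimensional_of_le hY
  have h1 := Submodule.finrank_sup_add_finrank_inf_eq X Y
  rw [h, finrank_bot, add_zero] at h1
  rw [← h1]
  exact Submodule.finrank_mono (sup_le hX hY)

/-- Elements of `X` that are at least `p`. -/
def geF (p : Fin n →₀ ℕ) (X : Finset (Fin n →₀ ℕ)) : Finset (Fin n →₀ ℕ) :=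
  X.filter (fun m => toLex p ≤ toLex m)

/-- Potential of a set of exponents. -/
def pot (d : ℕ) (X : Finset (Fin n →₀ ℕ)) : ℕ := ∑ p ∈ monos n d, (geF p X).card

theorem act_mono {g : GL (Fin n) K} {V W : Submodule K (PS K n)} (h : V ≤ W) :
    act g V ≤ act g W := Submodule.map_mono h

theorem mS_mono {B C : Finset (Fin n →₀ ℕ)} (h : B ⊆ C) :
    (mS B : Submodule K (PS K n)) ≤ mS C :=
  fun _ hf => mem_mS.2 fun m hm => h (mem_mS.1 hf m hm)

theorem st_step [CharZero K] {d : ℕ} {B : Finset (Fin n →₀ ℕ)} (hB : B ⊆ monos n d)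
    {u : Fin n →₀ ℕ} (hu : u ∈ B) {i j : Fin n} (hij : i < j) (huj : 0 < u j)
    (hv : sh i j u 1 ∉ B) (hvd : sh i j u 1 ∈ monos n d) :
    ∃ B' ⊆ monos n d, Dom (mS B : Submodule K (PS K n)) (mS B') ∧ B'.card = B.card ∧
      pot d B < pot d B' := by
  classical
  set e : GL (Fin n) K := transGL i j hij.ne 1 with he
  set v := sh i j u 1 with hvdef
  set U : Submodule K (PS K n) := act e (mS B) with hU
  have hUh : U ≤ homogeneousSubmodule (Fin n) K d := act_le_hom (mS_le_hom hB) e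
  have hUf := finite_of_le hUh
  have hUr : Module.finrank K U = B.card := by rw [hU, finrank_act, finrank_mS]
  have huv : toLex u < toLex v := by
    rw [← lexLt_iff, lexLt_iff_lxlt]
    refine ⟨i, fun l hl => (sh_apply_ne i j u 1 l hl.ne (hl.trans hij).ne).symm, ?_⟩
    rw [hvdef, sh_apply_i _ _ hij.ne]; omega
  have gen : ∀ (p : Fin n →₀ ℕ) (Z : Finset (Fin n →₀ ℕ)), Z ⊆ B →
      (∀ f ∈ (mS Z : Submodule K (PS K n)), coordChange K n e f ∈ LOs p → f = 0) →
      Module.finrank K ↥(U ⊓ LOs p) + Z.card ≤ B.card := by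
    intro p Z hZ h
    have h1 := finrank_add_le (U := U) (X := U ⊓ LOs p) (Y := act e (mS Z)) inf_le_left
      (act_mono (mS_mono hZ)) (by
        rw [eq_bot_iff]
        rintro x ⟨⟨_, hx⟩, hx'⟩
        obtain ⟨f, hf, rfl⟩ := mem_act.1 hx'
        rw [h f hf hx]; simp)
    rwa [finrank_act, finrank_mS, hUr] at h1
  have hcount : ∀ p, ((inM d U).filter (fun m => ¬ toLex p ≤ toLex m)).card ≤
      Module.finrank K ↥(U ⊓ LOs p) := by
    intro p
    have : Module.Finite K ↥(U ⊓ LOs p) := Submodule.finiteDimensional_of_le inf_le_left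
    apply card_le_finrank
    intro m hm
    rw [Finset.mem_filter, not_le] at hm
    obtain ⟨_, f, hfU, hf⟩ := mem_inM.1 hm.1
    refine ⟨f, ⟨hfU, mem_LOs.2 (fun m' hm' => ?_)⟩, hf⟩
    rcases hf.2 m' hm' with h | h
    · rw [h]; exact hm.2
    · exact lt_trans (lexLt_iff.1 h) hm.2
  have hcard : (inM d U).card = B.card := by rw [card_inM hUh, hUr]
  have hsplit : ∀ p, (geF p (inM d U)).card +
      ((inM d U).filter (fun m => ¬ toLex p ≤ toLex m)).card = B.card := by
    intro p
    rw [← hcard]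
    exact Finset.card_filter_add_card_filter_not _
  have hbase : ∀ p f, f ∈ (mS (geF p B) : Submodule K (PS K n)) → f ∈ UPs p := by
    intro p f hf
    exact mem_UPs.2 (fun m hm => (Finset.mem_filter.1 (mem_mS.1 hf m hm)).2)
  refine ⟨inM d U, fun m hm => mem_monos.2 (mem_inM.1 hm).1,
    (dom_act e _).trans (dom_init hUh), hcard, ?_⟩
  apply Finset.sum_lt_sum
  · intro p _
    have h1 := gen p (geF p B) (Finset.filter_subset _ _) (by
      intro f hf hf'
      have := eq_zero_of_UPs_LOs (trans_UPs i j hij 1 p (hbase p f hf)) hf'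
      exact coordChange_injective e (by rw [map_zero]; exact this))
    have h2 := hcount p
    have h3 := hsplit p
    omega
  · refine ⟨v, hvd, ?_⟩
    have huge : u ∉ geF v B := by
      intro h
      exact absurd huv (not_lt.2 (Finset.mem_filter.1 h).2)
    have h1 := gen v (insert u (geF v B))
      (Finset.insert_subset hu (Finset.filter_subset _ _)) (by
      intro f hf hf'
      set α := coeff u f with hα
      have hh : f - monomial u α ∈ UPs v := by
        refine mem_UPs.2 (fun m hm => ?_)
        rw [mem_support_iff, coeff_sub, coeff_monomial] at hm
        by_cases hmu : u = m
        · subst hmu; simp [hα] at hm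
        · rw [if_neg hmu, sub_zero] at hm
          have := mem_mS.1 hf m (mem_support_iff.2 hm)
          rw [Finset.mem_insert] at this
          exact (Finset.mem_filter.1 (this.resolve_left (Ne.symm hmu))).2
      have hmon : (monomial u α : PS K n) = α • monomial u 1 := by
        simp [MvPolynomial.smul_monomial]
      have hzero : coordChange K n e f - monomial u α = 0 := by
        apply eq_zero_of_UPs_LOs (p := v)
        · have h1 := trans_UPs i j hij 1 v hh
          have h2 := Submodule.smul_mem _ α (trans_sub_UPs (K := K) i j hij 1 u)
          have h3 := Submodule.add_mem _ h1 h2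
          rw [map_sub, smul_sub, ← map_smul, ← hmon] at h3
          convert h3 using 1
          rw [he]; abel
        · exact Submodule.sub_mem _ hf' (monomial_mem_LOs huv _)
      have hef : coordChange K n e f = monomial u α := sub_eq_zero.1 hzero
      have hfe : f = α • coordChange K n (transGL i j hij.ne (-1)) (monomial u 1) := by
        rw [← map_smul, ← hmon, ← hef, ← coordChange_mul, he, transGL_mul, coordChange_one]
      have hcv : coeff v f = 0 := by
        by_contra hne
        have := mem_mS.1 hf v (mem_support_iff.2 hne)
        rw [Finset.mem_insert] at this
        rcases this with h | h
        · rw [h] at huv; exact lt_irrefl _ huv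
        · exact hv (Finset.mem_filter.1 h).1
      rw [hfe, coeff_smul, trans_coeff i j hij.ne (-1) u huj] at hcv
      have hα0 : α = 0 := by
        have : (u j : K) ≠ 0 := by exact_mod_cast huj.ne'
        simpa [this] using hcv
      rw [hfe, hα0, zero_smul])
    rw [Finset.card_insert_of_notMem huge] at h1
    have h2 := hcount v
    have h3 := hsplit v
    omega

theorem st_exists [CharZero K] {d : ℕ} {V : Submodule K (PS K n)}
    (hV : V ≤ homogeneousSubmodule (Fin n) K d) :
    ∃ B ⊆ monos n d, Dom V (mS B) ∧ B.card = Module.finrank K V ∧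
      ∀ u ∈ B, ∀ i j : Fin n, i < j → 0 < u j → sh i j u 1 ∈ B := by
  classical
  obtain ⟨B, hB, hmax⟩ := Finset.exists_max_image ((monos n d).powerset.filter
    (fun B => Dom V (mS B) ∧ B.card = Module.finrank K V)) (pot d)
    ⟨inM d V, by
      rw [Finset.mem_filter, Finset.mem_powerset]
      exact ⟨fun m hm => mem_monos.2 (mem_inM.1 hm).1, dom_init hV, card_inM hV⟩⟩
  rw [Finset.mem_filter, Finset.mem_powerset] at hB
  obtain ⟨hBs, hD, hc⟩ := hB
  refine ⟨B, hBs, hD, hc, ?_⟩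
  intro u hu i j hij huj
  by_contra hv
  have hvd : sh i j u 1 ∈ monos n d := by
    have h1 := mem_monos.1 (hBs hu)
    rw [mem_monos]
    have h2 : u = u.erase j + Finsupp.single j (u j) := (Finsupp.erase_add_single j u).symm
    have hadd : ∀ a b : Fin n →₀ ℕ, expDeg n (a + b) = expDeg n a + expDeg n b := by
      intro a b; simp [expDeg, Finset.sum_add_distrib]
    have hsin : ∀ (l : Fin n) (k : ℕ), expDeg n (Finsupp.single l k) = k := by
      intro l k; simp [expDeg, Finsupp.single_apply]
    rw [h2, hadd, hsin] at h1
    rw [sh, hadd, hadd, hsin, hsin]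
    omega
  obtain ⟨B', hB', hD', hc', hlt⟩ := st_step (K := K) hBs hu hij huj hv hvd
  have := hmax B' (by
    rw [Finset.mem_filter, Finset.mem_powerset]
    exact ⟨hB', hD.trans hD', hc'.trans hc⟩)
  omega

end Stable

section Graded

variable {K n}

/-- The degree `d` part of an ideal. -/
def gr (I : Ideal (PS K n)) (d : ℕ) : Submodule K (PS K n) :=
  Submodule.restrictScalars K I ⊓ homogeneousSubmodule (Fin n) K d

theorem hilb_eq (I : Ideal (PS K n)) (d : ℕ) : hilb K n I d = Module.finrank K (gr I d) := rfl

theorem gr_le (I : Ideal (PS K n)) (d : ℕ) : gr I d ≤ homogeneousSubmodule (Fin n) K d :=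
  inf_le_right

theorem mem_gr {I : Ideal (PS K n)} {d : ℕ} {f : PS K n} :
    f ∈ gr I d ↔ f ∈ I ∧ f ∈ homogeneousSubmodule (Fin n) K d := Iff.rfl

theorem gr_finite (I : Ideal (PS K n)) (d : ℕ) : Module.Finite K (gr I d) :=
  finite_of_le (gr_le I d)

theorem gr_inf (I J : Ideal (PS K n)) (d : ℕ) : gr (I ⊓ J) d = gr I d ⊓ gr J d := by
  ext f
  simp only [mem_gr, Submodule.mem_inf]
  tauto

theorem mem_map_coord {J : Ideal (PS K n)} {g : GL (Fin n) K} {f : PS K n} :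
    f ∈ Ideal.map (coordChange K n g) J ↔ ∃ v ∈ J, coordChange K n g v = f := by
  have hs : Function.Surjective (coordChange K n g) :=
    fun f => ⟨_, coordChange_apply_inv g f⟩
  exact Ideal.mem_map_iff_of_surjective (coordChange K n g) hs

theorem gr_map (J : Ideal (PS K n)) (g : GL (Fin n) K) (d : ℕ) :
    gr (Ideal.map (coordChange K n g) J) d = act g (gr J d) := by
  ext f
  rw [mem_gr, mem_act, mem_map_coord]
  constructor
  · rintro ⟨⟨v, hv, rfl⟩, h⟩
    refine ⟨v, mem_gr.2 ⟨hv, ?_⟩, rfl⟩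
    have := coordChange_hom g⁻¹ h
    rwa [coordChange_inv_apply] at this
  · rintro ⟨v, hv, rfl⟩
    exact ⟨⟨v, (mem_gr.1 hv).1, rfl⟩, coordChange_hom g (mem_gr.1 hv).2⟩

theorem hc_coord (g : GL (Fin n) K) (f : PS K n) (d : ℕ) :
    homogeneousComponent d (coordChange K n g f) = coordChange K n g (homogeneousComponent d f) := by
  have h : ∀ i, homogeneousComponent d (coordChange K n g (homogeneousComponent i f)) =
      coordChange K n g (homogeneousComponent d (homogeneousComponent i f)) := by
    intro i
    have h1 := homogeneousComponent_mem (σ := Fin n) (R := K) i f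
    rw [homogeneousComponent_of_mem h1, homogeneousComponent_of_mem (coordChange_hom g h1)]
    split_ifs <;> simp
  conv_lhs => rw [← sum_homogeneousComponent f]
  conv_rhs => rw [← sum_homogeneousComponent f]
  simp only [map_sum, h]

theorem homog_map {J : Ideal (PS K n)} (hJ : IsHomog K n J) (g : GL (Fin n) K) :
    IsHomog K n (Ideal.map (coordChange K n g) J) := by
  intro f hf d
  obtain ⟨v, hv, rfl⟩ := mem_map_coord.1 hf
  rw [hc_coord]
  exact mem_map_coord.2 ⟨_, hJ v hv d, rfl⟩

theorem homog_sup {I J : Ideal (PS K n)} (hI : IsHomog K n I) (hJ : IsHomog K n J) :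
    IsHomog K n (I ⊔ J) := by
  intro f hf d
  obtain ⟨a, ha, b, hb, rfl⟩ := Submodule.mem_sup.1 hf
  rw [map_add]
  exact Submodule.add_mem_sup (hI a ha d) (hJ b hb d)

theorem gr_sup {I J : Ideal (PS K n)} (hI : IsHomog K n I) (hJ : IsHomog K n J) (d : ℕ) :
    gr (I ⊔ J) d = gr I d ⊔ gr J d := by
  apply le_antisymm
  · intro f hf
    obtain ⟨h1, h2⟩ := mem_gr.1 hf
    obtain ⟨a, ha, b, hb, rfl⟩ := Submodule.mem_sup.1 h1
    rw [← homogeneousComponent_eq_self ((mem_homogeneousSubmodule d _).1 h2), map_add]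
    exact Submodule.add_mem_sup (mem_gr.2 ⟨hI a ha d, homogeneousComponent_mem d a⟩)
      (mem_gr.2 ⟨hJ b hb d, homogeneousComponent_mem d b⟩)
  · apply sup_le
    · intro f hf
      exact mem_gr.2 ⟨Submodule.mem_sup_left (mem_gr.1 hf).1, (mem_gr.1 hf).2⟩
    · intro f hf
      exact mem_gr.2 ⟨Submodule.mem_sup_right (mem_gr.1 hf).1, (mem_gr.1 hf).2⟩

theorem isLd_mul {f : PS K n} {m : Fin n →₀ ℕ} (h : IsLd f m) (a : Fin n →₀ ℕ) :
    IsLd (monomial a (1 : K) * f) (a + m) := by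
  constructor
  · rw [mem_support_iff, coeff_monomial_mul, one_mul]
    exact mem_support_iff.1 h.1
  · intro m' hm'
    rw [mem_support_iff, coeff_monomial_mul'] at hm'
    split_ifs at hm' with hle
    · rw [one_mul] at hm'
      obtain ⟨c, rfl⟩ := le_iff_exists_add.1 hle
      rw [add_tsub_cancel_left] at hm'
      rcases h.2 c (mem_support_iff.2 hm') with rfl | h
      · exact Or.inl rfl
      · right
        rw [lexLt_iff] at h ⊢
        exact add_lt_add_right h (toLex a)
    · exact absurd rfl hm'

theorem isLd_hc {f : PS K n} {m : Fin n →₀ ℕ} (h : IsLd f m) :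
    IsLd (homogeneousComponent (expDeg n m) f) m := by
  constructor
  · rw [support_homogeneousComponent, Finset.mem_filter]
    exact ⟨h.1, Finsupp.degree_eq_sum m⟩
  · intro m' hm'
    rw [support_homogeneousComponent, Finset.mem_filter] at hm'
    exact h.2 m' hm'.1

theorem lead_up {I : Ideal (PS K n)} (hI : IsHomog K n I) {f : PS K n} (hf : f ∈ I)
    {m v : Fin n →₀ ℕ} (h : IsLd f m) (hv : m ≤ v) : ∃ q ∈ gr I (expDeg n v), IsLd q v := by
  obtain ⟨a, rfl⟩ := le_iff_exists_add'.1 hv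
  exact ⟨_, mem_gr.2 ⟨hI _ (Ideal.mul_mem_left _ _ hf) _, homogeneousComponent_mem _ _⟩,
    isLd_hc (isLd_mul h a)⟩

theorem dickson (Λ : Set (Fin n →₀ ℕ)) : ∃ Φ : Finset (Fin n →₀ ℕ), (∀ m ∈ Φ, m ∈ Λ) ∧
    ∀ v ∈ Λ, ∃ m ∈ Φ, m ≤ v := by
  have hpwo : Λ.IsPWO := Set.isPWO_of_wellQuasiOrderedLE Λ
  have hfin := (setOfPred_minimal_antichain (· ∈ Λ)).finite_of_partiallyWellOrderedOn
    (hpwo.mono (setOfPred_minimal_subset _))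
  refine ⟨hfin.toFinset, ?_, ?_⟩
  · intro m hm
    exact ((Set.Finite.mem_toFinset hfin).1 hm).1
  · intro v hv
    obtain ⟨z, hz, hz'⟩ := hpwo.exists_le_minimal hv
    exact ⟨z, (Set.Finite.mem_toFinset hfin).2 hz', hz⟩

/-- Evaluation at a matrix. -/
def evG (g : GL (Fin n) K) : MvPolynomial (Fin n × Fin n) K →ₐ[K] K :=
  MvPolynomial.aeval (fun p => (g : Matrix (Fin n) (Fin n) K) p.1 p.2)

/-- The generic change of coordinates. -/
def gen : PS K n →ₐ[K] MvPolynomial (Fin n) (MvPolynomial (Fin n × Fin n) K) :=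
  genChange (Matrix.of fun i j => X (i, j))

theorem evG_C (g : GL (Fin n) K) (f : PS K n) : MvPolynomial.map (evG g : _ →+* K)
    (MvPolynomial.map (C : K →+* MvPolynomial (Fin n × Fin n) K) f) = f := by
  rw [MvPolynomial.map_map]
  have : (evG g : MvPolynomial (Fin n × Fin n) K →+* K).comp C = RingHom.id K := by
    ext a; simp [evG]
  rw [this, MvPolynomial.map_id]

theorem evG_gen (g : GL (Fin n) K) (f : PS K n) : MvPolynomial.map (evG g : _ →+* K)
    (gen f) = coordChange K n g f := by
  have : (MvPolynomial.mapAlgHom (σ := Fin n) (evG g)).comp gen = coordChange K n g := by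
    apply MvPolynomial.algHom_ext
    intro i
    rw [AlgHom.comp_apply, coordChange_X, gen, genChange, aeval_X, map_sum]
    refine Finset.sum_congr rfl (fun j _ => ?_)
    simp [MvPolynomial.smul_eq_C_mul, evG]
  exact congrArg (fun φ : PS K n →ₐ[K] PS K n => φ f) this

theorem uniform {I J : Ideal (PS K n)} (hI : IsHomog K n I) (hJ : IsHomog K n J) :
    generally K n (fun g => ∀ d (g0 : GL (Fin n) K),
      Module.finrank K ↥(gr I d ⊔ act g0 (gr J d)) ≤
        Module.finrank K ↥(gr I d ⊔ act g (gr J d))) := by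
  classical
  set A := MvPolynomial (Fin n × Fin n) K with hA
  let 𝓘 : Ideal (MvPolynomial (Fin n) A) := Ideal.span
    ((MvPolynomial.map (C : K →+* A)) '' (I : Set (PS K n)) ∪ gen '' (J : Set (PS K n)))
  have hev : ∀ (g : GL (Fin n) K), ∀ q ∈ 𝓘, MvPolynomial.map (evG g : A →+* K) q ∈
      I ⊔ Ideal.map (coordChange K n g) J := by
    intro g q hq
    have : 𝓘 ≤ Ideal.comap (MvPolynomial.map (evG g : A →+* K))
        (I ⊔ Ideal.map (coordChange K n g) J) := by
      apply Ideal.span_le.2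
      rintro _ (⟨f, hf, rfl⟩ | ⟨f, hf, rfl⟩)
      · rw [SetLike.mem_coe, Ideal.mem_comap, evG_C]
        exact Submodule.mem_sup_left hf
      · rw [SetLike.mem_coe, Ideal.mem_comap, evG_gen]
        exact Submodule.mem_sup_right (mem_map_coord.2 ⟨f, hf, rfl⟩)
    exact this hq
  let Λ : Set (Fin n →₀ ℕ) := {m | ∃ f ∈ 𝓘, IsLd f m}
  obtain ⟨Φ, hΦ, hΦ'⟩ := dickson Λ
  choose! f hf hld using hΦ
  refine ⟨∏ m ∈ Φ, coeff m (f m), Finset.prod_ne_zero_iff.2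
    (fun m hm => mem_support_iff.1 (hld m hm).1), ?_⟩
  intro g hg d g0
  have hgm : ∀ m ∈ Φ, IsLd (MvPolynomial.map (evG g : A →+* K) (f m)) m := by
    intro m hm
    constructor
    · rw [mem_support_iff, coeff_map]
      rw [map_prod] at hg
      exact Finset.prod_ne_zero_iff.1 hg m hm
    · intro m' hm'
      exact (hld m hm).2 m' (support_map_subset _ _ hm')
  let Λd : Finset (Fin n →₀ ℕ) := (monos n d).filter (· ∈ Λ)
  have fin1 := gr_finite I d
  have fin2 := gr_finite J d
  have fin3 := act_finite g (gr J d)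
  have fin4 := act_finite g0 (gr J d)
  have le1 : Λd.card ≤ Module.finrank K ↥(gr I d ⊔ act g (gr J d)) := by
    apply card_le_finrank
    intro v hv
    obtain ⟨hvd, hv⟩ := Finset.mem_filter.1 hv
    obtain ⟨m, hm, hmv⟩ := hΦ' v hv
    have := lead_up (homog_sup hI (homog_map hJ g)) (hev g _ (hf m hm)) (hgm m hm) hmv
    rwa [mem_monos.1 hvd, gr_sup hI (homog_map hJ g), gr_map] at this
  refine le_trans ?_ le1
  set s : Set (PS K n) := (gr I d : Set (PS K n)) ∪ (act g0 (gr J d) : Set (PS K n)) with hs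
  have hspan : gr I d ⊔ act g0 (gr J d) = Submodule.span K s := by
    rw [hs, Submodule.span_union, Submodule.span_eq, Submodule.span_eq]
  rw [hspan]
  have hfin : Module.Finite K (Submodule.span K s) := by rw [← hspan]; infer_instance
  obtain ⟨p, hp, D, hD, hli⟩ := semi_span (evG g0) s
    {q | q ∈ 𝓘 ∧ q ∈ homogeneousSubmodule (Fin n) A d} (by
    rintro v (hv | hv)
    · refine ⟨MvPolynomial.map C v, ⟨Ideal.subset_span (Or.inl ⟨v, (mem_gr.1 hv).1, rfl⟩), ?_⟩,
        evG_C g0 v⟩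
      rw [mem_homogeneousSubmodule]
      exact ((mem_homogeneousSubmodule d _).1 (mem_gr.1 hv).2).map _
    · obtain ⟨w, hw, rfl⟩ := mem_act.1 hv
      exact ⟨gen w, ⟨Ideal.subset_span (Or.inr ⟨w, (mem_gr.1 hw).1, rfl⟩),
        genChange_hom _ (mem_gr.1 hw).2⟩, evG_gen g0 w⟩)
  have hl := hli A (AlgHom.id K A) (by rintro h; apply hD; rw [AlgHom.id_apply] at h; rw [h]; simp)
  have hl' : LinearIndependent A p := by
    have : (fun i => MvPolynomial.map ((AlgHom.id K A : A →ₐ[K] A) : A →+* A) (p i)) = p := by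
      funext i
      exact MvPolynomial.map_id (p i)
    rwa [this] at hl
  have := card_le_of_support p hl' Λd ?_
  · simpa using this
  intro q hq hq0
  have hq1 : q ∈ 𝓘 ∧ q ∈ homogeneousSubmodule (Fin n) A d := by
    have : Submodule.span A (Set.range p) ≤
        Submodule.restrictScalars A 𝓘 ⊓ homogeneousSubmodule (Fin n) A d := by
      apply Submodule.span_le.2
      rintro _ ⟨i, rfl⟩
      exact hp i
    exact this hq
  obtain ⟨m, hm⟩ := exists_isLd q hq0
  exact ⟨m, Finset.mem_filter.2 ⟨mem_monos.2 (mem_hom.1 hq1.2 m hm.1), q, hq1.1, hm⟩, hm.1⟩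

end Graded

section JSide

variable {K n}

/-- The exponents of the monomials of degree `d` in `I`. -/
def ms (I : Ideal (PS K n)) (d : ℕ) : Finset (Fin n →₀ ℕ) := by
  classical
  exact (monos n d).filter (fun m => monomial m (1 : K) ∈ I)

theorem mem_ms {I : Ideal (PS K n)} {d : ℕ} {m : Fin n →₀ ℕ} :
    m ∈ ms I d ↔ expDeg n m = d ∧ monomial m (1 : K) ∈ I := by
  classical
  simp [ms, mem_monos]

theorem ms_sub (I : Ideal (PS K n)) (d : ℕ) : ms I d ⊆ monos n d :=
  fun _ hm => mem_monos.2 (mem_ms.1 hm).1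

theorem gr_monomial {I : Ideal (PS K n)} (hI : IsMonomialIdeal K n I) (d : ℕ) :
    gr I d = mS (ms I d) := by
  ext f
  rw [mem_gr, mem_mS, mem_hom]
  constructor
  · rintro ⟨h1, h2⟩ m hm
    exact mem_ms.2 ⟨h2 m hm, hI f h1 m hm⟩
  · intro h
    refine ⟨?_, fun m hm => (mem_ms.1 (h m hm)).1⟩
    rw [f.as_sum]
    refine Ideal.sum_mem _ (fun m hm => ?_)
    have := Ideal.mul_mem_left I (C (coeff m f)) (mem_ms.1 (h m hm)).2
    rwa [C_mul_monomial, mul_one] at this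

theorem hilb_monomial {I : Ideal (PS K n)} (hI : IsMonomialIdeal K n I) (d : ℕ) :
    hilb K n I d = (ms I d).card := by
  rw [hilb_eq, gr_monomial hI, finrank_mS]

theorem inM_lex {J' : Ideal (PS K n)} (hJ' : IsHomog K n J')
    (hlex : IsLexIdeal K n (initialIdealO K n (lexLt n) J')) (d : ℕ)
    {u v : Fin n →₀ ℕ} (hu : u ∈ inM d (gr J' d)) (hv : expDeg n v = d) (h : lexLt n u v) :
    v ∈ inM d (gr J' d) := by
  obtain ⟨hud, f, hf, hld⟩ := mem_inM.1 hu
  have h1 : monomial u (1 : K) ∈ initialIdealO K n (lexLt n) J' :=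
    Ideal.subset_span ⟨f, (mem_gr.1 hf).1, u, hld.1, hld.2, rfl⟩
  have h2 := hlex.2 u v (hud.trans hv.symm) h1 h
  have h3 : initialIdealO K n (lexLt n) J' =
      Ideal.span ((fun s => monomial s (1 : K)) '' {m | ∃ f ∈ J', IsLd f m}) := by
    unfold initialIdealO
    congr 1
    ext q
    constructor
    · rintro ⟨f, hf, m, hm, hm', rfl⟩
      exact ⟨m, ⟨f, hf, hm, hm'⟩, rfl⟩
    · rintro ⟨m, ⟨f, hf, hm, hm'⟩, rfl⟩
      exact ⟨f, hf, m, hm, hm', rfl⟩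
  rw [h3, mem_ideal_span_monomial_image] at h2
  obtain ⟨m, ⟨q, hq, hqm⟩, hmv⟩ := h2 v (by simp [mem_support_iff])
  subst hv
  exact mem_inM.2 ⟨rfl, lead_up hJ' hq hqm hmv⟩

/-- Reversal of exponents. -/
def rv (m : Fin n →₀ ℕ) : Fin n →₀ ℕ := Finsupp.mapDomain Fin.rev m

theorem rv_apply (m : Fin n →₀ ℕ) (i : Fin n) : rv m i = m i.rev := by
  have := Finsupp.mapDomain_apply Fin.rev_injective m i.rev
  rwa [Fin.rev_rev] at this

theorem rv_rv (m : Fin n →₀ ℕ) : rv (rv m) = m := by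
  ext i; simp [rv_apply]

theorem rv_deg (m : Fin n →₀ ℕ) : expDeg n (rv m) = expDeg n m := by
  unfold expDeg
  simp only [rv_apply]
  exact Equiv.sum_comp Fin.revPerm (fun i => m i)

theorem rv_op {u v : Fin n →₀ ℕ} (h : oplexLt n u v) : lexLt n (rv u) (rv v) := by
  obtain ⟨i, hi, hi'⟩ := oplexLt_iff_oplt.1 h
  refine lexLt_iff_lxlt.2 ⟨i.rev, fun j hj => ?_, ?_⟩
  · rw [rv_apply, rv_apply]
    exact hi _ (by rwa [← Fin.rev_lt_rev, Fin.rev_rev])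
  · simpa [rv_apply] using hi'

theorem rv_lex {u v : Fin n →₀ ℕ} (h : lexLt n u v) : oplexLt n (rv u) (rv v) := by
  obtain ⟨i, hi, hi'⟩ := lexLt_iff_lxlt.1 h
  refine oplexLt_iff_oplt.2 ⟨i.rev, fun j hj => ?_, ?_⟩
  · rw [rv_apply, rv_apply]
    exact hi _ (by rwa [← Fin.rev_lt_rev, Fin.rev_rev])
  · simpa [rv_apply] using hi'

theorem op_tri (u v : Fin n →₀ ℕ) : oplexLt n u v ∨ u = v ∨ oplexLt n v u := by
  rcases lt_trichotomy (toLex (rv u)) (toLex (rv v)) with h | h | h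
  · have := rv_lex (lexLt_iff.2 h)
    rw [rv_rv, rv_rv] at this
    exact Or.inl this
  · have := congrArg rv (toLex.injective h)
    rw [rv_rv, rv_rv] at this
    exact Or.inr (Or.inl this)
  · have := rv_lex (lexLt_iff.2 h)
    rw [rv_rv, rv_rv] at this
    exact Or.inr (Or.inr this)

theorem op_unique {d : ℕ} {T Q : Finset (Fin n →₀ ℕ)} (hT : T ⊆ monos n d) (hQ : Q ⊆ monos n d)
    (hT' : ∀ u ∈ T, ∀ v, expDeg n v = d → oplexLt n u v → v ∈ T)
    (hQ' : ∀ u ∈ Q, ∀ v, expDeg n v = d → oplexLt n u v → v ∈ Q) (h : T.card = Q.card) :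
    T = Q := by
  by_cases hTQ : T ⊆ Q
  · exact Finset.eq_of_subset_of_card_le hTQ h.ge
  · obtain ⟨u, hu, huQ⟩ := Finset.not_subset.1 hTQ
    refine (Finset.eq_of_subset_of_card_le (fun v hv => ?_) h.le).symm
    rcases op_tri u v with h | h | h
    · exact hT' u hu v (mem_monos.1 (hQ hv)) h
    · exact h ▸ hu
    · exact absurd (hQ' v hv u (mem_monos.1 (hT hu)) h) huQ

/-- The reversal of coordinates. -/
def revGL : GL (Fin n) K :=
  ⟨Matrix.of fun i j => if i = j.rev then 1 else 0, Matrix.of fun i j => if i = j.rev then 1 else 0,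
    by ext i j; simp [Matrix.mul_apply, Matrix.one_apply],
    by ext i j; simp [Matrix.mul_apply, Matrix.one_apply]⟩

theorem coordChange_rev (f : PS K n) : coordChange K n revGL f = rename Fin.rev f := by
  have : coordChange K n revGL = rename Fin.rev := by
    apply MvPolynomial.algHom_ext
    intro i
    rw [coordChange_X, rename_X]
    simp [revGL]
  rw [this]

theorem act_rev (B : Finset (Fin n →₀ ℕ)) [DecidableEq (Fin n →₀ ℕ)] :
    act revGL (mS B : Submodule K (PS K n)) = mS (B.image rv) := by
  rw [act, mS, mS, restrictSupport_eq_span, restrictSupport_eq_span, Submodule.map_span,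
    ← Set.image_comp, Finset.coe_image, ← Set.image_comp]
  congr 2
  funext m
  change coordChange K n revGL (monomial m 1) = _
  rw [coordChange_rev, rename_monomial]
  rfl

theorem exists_gl [Infinite K] (F : MvPolynomial (Fin n × Fin n) K) (hF : F ≠ 0) :
    ∃ g : GL (Fin n) K, MvPolynomial.eval (fun p => (g : Matrix (Fin n) (Fin n) K) p.1 p.2) F ≠ 0 := by
  have hD : Matrix.det (Matrix.mvPolynomialX (Fin n) (Fin n) K) ≠ 0 :=
    Matrix.det_mvPolynomialX_ne_zero (Fin n) K
  have h : F * Matrix.det (Matrix.mvPolynomialX (Fin n) (Fin n) K) ≠ 0 := mul_ne_zero hF hD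
  obtain ⟨x, hx⟩ : ∃ x, MvPolynomial.eval x
      (F * Matrix.det (Matrix.mvPolynomialX (Fin n) (Fin n) K)) ≠ 0 := by
    by_contra! hc
    exact h (MvPolynomial.funext (fun x => by rw [hc x, map_zero]))
  rw [map_mul] at hx
  have h1 := left_ne_zero_of_mul hx
  have h2 := right_ne_zero_of_mul hx
  rw [RingHom.map_det] at h2
  have h3 : (MvPolynomial.eval x).mapMatrix (Matrix.mvPolynomialX (Fin n) (Fin n) K) =
      Matrix.of fun i j => x (i, j) := by
    ext i j; simp [Matrix.mvPolynomialX]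
  rw [h3] at h2
  exact ⟨Matrix.GeneralLinearGroup.mkOfDetNeZero _ h2, h1⟩

theorem dom_J [CharZero K] {J : Ideal (PS K n)} (hJ : IsHomog K n J)
    (GinJ : Ideal (PS K n))
    (hGinJ : generally K n (fun g =>
      initialIdealO K n (lexLt n) (Ideal.map (coordChange K n g) J) = GinJ))
    (hGinJlex : IsLexIdeal K n GinJ)
    (Jop : Ideal (PS K n)) (hJop : IsOplexIdeal K n Jop)
    (hJopHilb : ∀ d : ℕ, hilb K n Jop d = hilb K n J d) (d : ℕ) :
    Dom (gr J d) (mS (ms Jop d)) := by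
  classical
  obtain ⟨F, hF, hFg⟩ := hGinJ
  obtain ⟨g, hg⟩ := exists_gl F hF
  have hin := hFg g hg
  rw [← hin] at hGinJlex
  have hlex := fun u v => inM_lex (homog_map hJ g) hGinJlex d (u := u) (v := v)
  have hle := gr_le (Ideal.map (coordChange K n g) J) d
  have hcard := card_inM hle
  have hdom := (dom_act g (gr J d)).trans (gr_map J g d ▸ dom_init hle)
  set T := inM d (gr (Ideal.map (coordChange K n g) J) d) with hT
  have hdom2 := hdom.trans (dom_act revGL _)
  rw [act_rev] at hdom2
  have : T.image rv = ms Jop d := by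
    apply op_unique (d := d)
    · intro m hm
      obtain ⟨u, hu, rfl⟩ := Finset.mem_image.1 hm
      rw [mem_monos, rv_deg]
      exact (mem_inM.1 hu).1
    · exact ms_sub _ _
    · intro m hm v hv h
      obtain ⟨u, hu, rfl⟩ := Finset.mem_image.1 hm
      have := rv_op h
      rw [rv_rv] at this
      exact Finset.mem_image.2 ⟨rv v, hlex u _ hu ((rv_deg v).trans hv) this, rv_rv v⟩
    · intro u hu v hv h
      obtain ⟨h1, h2⟩ := mem_ms.1 hu
      exact mem_ms.2 ⟨hv, hJop.2 u v (h1.trans hv.symm) h2 h⟩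
    · rw [Finset.card_image_of_injective _ (Function.LeftInverse.injective rv_rv), hcard,
        ← hilb_monomial hJop.1, hJopHilb, hilb_eq, gr_map, finrank_act]
  rwa [← gr_map, ← hT, this] at hdom2

end JSide

section Final

variable {K n}

theorem comb_fs [DecidableEq (Fin n →₀ ℕ)] {d : ℕ} {B L T : Finset (Fin n →₀ ℕ)}
    (hB : B ⊆ monos n d)
    (hBst : ∀ u ∈ B, ∀ i j : Fin n, i < j → 0 < u j → sh i j u 1 ∈ B)
    (hL : L ⊆ monos n d) (hL' : ∀ u ∈ L, ∀ v, expDeg n v = d → lexLt n u v → v ∈ L)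
    (hT : T ⊆ monos n d) (hT' : ∀ u ∈ T, ∀ v, expDeg n v = d → oplexLt n u v → v ∈ T)
    (hcard : L.card = B.card) : (B ∩ T).card ≤ (L ∩ T).card := by
  classical
  set φ : (Fin n →₀ ℕ) ↪ (Fin n → ℕ) := Finsupp.equivFunOnFinite.toEmbedding with hφ
  have mem : ∀ (C : Finset (Fin n →₀ ℕ)) (v : Fin n → ℕ),
      v ∈ C.map φ ↔ Finsupp.equivFunOnFinite.symm v ∈ C := by
    intro C v
    rw [hφ, Finset.mem_map_equiv]
  have sub : ∀ C ⊆ monos n d, C.map φ ⊆ mon n d := by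
    intro C hC v hv
    rw [mem] at hv
    exact mem_mon.2 (mem_monos.1 (hC hv))
  have := comb_main n d (B.map φ) (L.map φ) (T.map φ) ⟨sub B hB, ?_⟩ ⟨sub L hL, ?_⟩
    (sub T hT) ?_ (by simpa using hcard)
  · rwa [← Finset.map_inter, ← Finset.map_inter, Finset.card_map, Finset.card_map] at this
  · intro u hu v i j hij h1 h2 h3
    rw [mem] at hu ⊢
    have := hBst _ hu i j hij (by
      change 0 < u j
      omega)
    convert this using 1
    ext k
    by_cases hki : k = i
    · subst hki
      rw [sh_apply_i _ _ hij.ne]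
      exact h1
    · by_cases hkj : k = j
      · subst hkj
        rw [sh_apply_j _ _ hij.ne]
        change v k = u k - 1
        omega
      · rw [sh_apply_ne _ _ _ _ _ hki hkj]
        exact h3 k hki hkj
  · intro u hu v hv h
    rw [mem] at hu ⊢
    exact hL' _ hu _ (mem_mon.1 hv) h
  · intro u hu v hv h
    rw [mem] at hu ⊢
    exact hT' _ hu _ (mem_mon.1 hv) h

theorem move (g : GL (Fin n) K) (V W : Submodule K (PS K n)) :
    Module.finrank K ↥(V ⊔ act g W) = Module.finrank K ↥(W ⊔ act g⁻¹ V) := by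
  rw [← finrank_act g (W ⊔ act g⁻¹ V), act_sup, ← act_mul, mul_inv_cancel, act_one, sup_comm]

theorem main_aux [CharZero K]
    (I J : Ideal (PS K n)) (hI : IsHomog K n I) (hJ : IsHomog K n J)
    (GinJ : Ideal (PS K n))
    (hGinJ : generally K n (fun g =>
      initialIdealO K n (lexLt n) (Ideal.map (coordChange K n g) J) = GinJ))
    (hGinJlex : IsLexIdeal K n GinJ)
    (Ilex : Ideal (PS K n)) (hIlex : IsLexIdeal K n Ilex)
    (hIlexHilb : ∀ d : ℕ, hilb K n Ilex d = hilb K n I d)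
    (Jop : Ideal (PS K n)) (hJop : IsOplexIdeal K n Jop)
    (hJopHilb : ∀ d : ℕ, hilb K n Jop d = hilb K n J d) :
    generally K n (fun g => ∀ d : ℕ,
      hilb K n (I ⊓ Ideal.map (coordChange K n g) J) d ≤ hilb K n (Ilex ⊓ Jop) d) := by
  classical
  obtain ⟨F, hF, hFg⟩ := uniform hI hJ
  refine ⟨F, hF, fun g hg d => ?_⟩
  have huni := hFg g hg d
  have hdJ := dom_J hJ GinJ hGinJ hGinJlex Jop hJop hJopHilb d
  obtain ⟨B, hB, hdI, hBcard, hBst⟩ := st_exists (gr_le I d)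
  have fI := gr_finite I d
  have fJ := gr_finite J d
  have fg := act_finite g (gr J d)
  obtain ⟨g1, hg1⟩ := hdJ (mS B) (mS_finite B) 1
  rw [act_one, mS_sup, finrank_mS, move] at hg1
  obtain ⟨g2, hg2⟩ := hdI (gr J d) fJ g1⁻¹
  rw [move g2] at hg2
  have hsup := (hg1.trans hg2).trans (huni g2⁻¹)
  have hL : (ms Ilex d).card = B.card := by
    rw [hBcard, ← hilb_monomial hIlex.1, hIlexHilb, hilb_eq]
  have hT : (ms Jop d).card = Module.finrank K (gr J d) := by
    rw [← hilb_monomial hJop.1, hJopHilb, hilb_eq]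
  have hcomb := comb_fs hB hBst (ms_sub Ilex d) (fun u hu v hv h => by
      obtain ⟨h1, h2⟩ := mem_ms.1 hu
      exact mem_ms.2 ⟨hv, hIlex.2 u v (h1.trans hv.symm) h2 h⟩) (ms_sub Jop d)
    (fun u hu v hv h => by
      obtain ⟨h1, h2⟩ := mem_ms.1 hu
      exact mem_ms.2 ⟨hv, hJop.2 u v (h1.trans hv.symm) h2 h⟩) hL
  have hmon : IsMonomialIdeal K n (Ilex ⊓ Jop) :=
    fun f hf m hm => ⟨hIlex.1 f hf.1 m hm, hJop.1 f hf.2 m hm⟩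
  have hms : ms (Ilex ⊓ Jop) d = ms Ilex d ∩ ms Jop d := by
    ext m
    simp only [Finset.mem_inter, mem_ms, Submodule.mem_inf]
    tauto
  rw [hilb_monomial hmon, hms, hilb_eq, gr_inf, gr_map]
  have e1 := Submodule.finrank_sup_add_finrank_inf_eq (gr I d) (act g (gr J d))
  rw [finrank_act] at e1
  have e2 := Finset.card_union_add_card_inter B (ms Jop d)
  omega

end Final

/-- **Theorem 1.3** (Caviglia–Murai): suppose `char K = 0`.  Let `I, J ⊆ S` be homogeneous
ideals such that `Gin_lex(J)` is lex.  For a general change of coordinates `g ∈ GL_n(K)`,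
`H(I ∩ g(J), d) ≤ H(I^lex ∩ J^oplex, d)` for all `d ≥ 0`. -/
theorem hilb_general_intersection_le_lex [CharZero K]
    (I J : Ideal (PS K n)) (hI : IsHomog K n I) (hJ : IsHomog K n J)
    (GinJ : Ideal (PS K n))
    (hGinJ : generally K n (fun g =>
      initialIdealO K n (lexLt n) (Ideal.map (coordChange K n g) J) = GinJ))
    (hGinJlex : IsLexIdeal K n GinJ)
    (Ilex : Ideal (PS K n)) (hIlex : IsLexIdeal K n Ilex)
    (hIlexHilb : ∀ d : ℕ, hilb K n Ilex d = hilb K n I d)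
    (Jop : Ideal (PS K n)) (hJop : IsOplexIdeal K n Jop)
    (hJopHilb : ∀ d : ℕ, hilb K n Jop d = hilb K n J d)
 :
    generally K n (fun g => ∀ d : ℕ,
      hilb K n (I ⊓ Ideal.map (coordChange K n g) J) d ≤ hilb K n (Ilex ⊓ Jop) d) := by
  exact main_aux I J hI hJ GinJ hGinJ hGinJlex Ilex hIlex hIlexHilb Jop hJop hJopHilb

end
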